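/- Let {S_i}_{i=1}^l be the affine IFS S_i(x) = A x + c_i on ℝ^d with ‖A‖ < 1, K its attractor, and π : Σ → K the canonical projection. Then for every f ∈ C(K), limsup_{n→∞} (1/n) log Σ_{Q ∈ Q_n, Q∩K ≠ ∅} sup_{α ∈ π^{-1}(Q∩K)} exp((S_n f∘π)(α)) ≤ sup { h_π(σ,m) + ∫ f∘π dm : m ∈ M_σ(Σ) }. -/

import Mathlib

/-!
The proof replaces the entropy of the partitions `Q_k = A^k Q` by the *smoothed entropy*
`smEnt μ X = ∫ η(μ{|X - s| ≤ 1}) ds` with `η t = -t log t` and `s` ranging over `ℝ^d`, applied to the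
vectors `X_k = A^{-k} π`. It is invariant under translations of `X`, and all branches of the system
have the same linear part, so self-similarity gives exact identities.

* *Projection entropy as a growth rate.* Conditional entropy given `Y` is a limit of smoothed-entropy
  differences at finer and finer scales (`tendsto_condEntropy`). On the cylinder `[j]` the vector
  `X_{k+1}` is a translate of `X_k ∘ σ`, so for a shift-invariant `m` the difference
  `smEnt m X_{k+1} - smEnt m X_k` tends to `v · h_π(σ, m)`, with `v` the volume of the unit ball
  (`Coding.tendsto_projEntropy`); averaging, `smEnt m X_k / k` has the same limit.

* *Block Bernoulli measures.* Choose one word for each cell of `Q_n` meeting `K`, and concatenate the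
  length-`n` prefixes of independently chosen words, the cell `j` having probability `p j`. A unit
  window of `X_{k+n}` sees at most `κ` first blocks, so each block adds at least `v (H(p) - log κ)`
  to the smoothed entropy (`Coding.smEnt_block`). Averaging over `n` shifts produces an invariant
  measure `m` with `n h_π(σ, m) ≥ H(p) - log κ` and `n ∫ g dm` equal to the mean of the Birkhoff sum
  `S_n g` (`Coding.bernoulli_bound`). By lattice point counting `κ` does not depend on `n`.

* *Gibbs weights.* Take words that nearly maximize `S_n f∘π` on their cells, and weights proportional
  to `exp (S_n f∘π)`. Entropy plus mean energy is then the logarithm of the partition function up to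
  a constant, and the continuity of `f` makes the Birkhoff sums vary by at most `n ε + O(1)` over an
  `n`-cylinder. Hence `log Zsum ≤ n (sup + ε) + O(1)` (`Coding.log_Zsum_le`).
-/

/- Projection pressure for affine IFS (Wang–Chen).
   Statement 2: upper bound in the variational principle. -/

open MeasureTheory Filter Set

noncomputable section

/-- The symbolic space `Σ = {1,…,l}^ℕ`. -/
abbrev Sig (l : ℕ) := ℕ → Fin l

/-- The left shift `σ` on `Σ`. -/
def shift {l : ℕ} (x : Sig l) : Sig l := fun n => x (n + 1)

/-- First-coordinate cylinder partition `P = {[j] : 1 ≤ j ≤ l}`. -/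
def cylP {l : ℕ} : Fin l → Set (Sig l) := fun j => {x | x 0 = j}

/-- Conditional entropy `H_μ(ξ | 𝒜) = ∫ I_μ(ξ|𝒜) dμ` of a finite partition `ξ`
    given a sub-σ-algebra `𝒜`, where
    `I_μ(ξ|𝒜) = -∑_{A ∈ ξ} 1_A · log E_μ(1_A | 𝒜)`. -/
def condEntropyPart {α : Type*} [MeasurableSpace α] {ι : Type*} [Fintype ι]
    (μ : Measure α) (part : ι → Set α) (m : MeasurableSpace α) : ℝ :=
  ∑ i : ι, ∫ x in part i,
    -Real.log ((μ[(part i).indicator (fun _ => (1 : ℝ)) | m]) x) ∂μ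

/-- Projection entropy `h_π(σ,μ) = H_μ(P | σ⁻¹π⁻¹γ) − H_μ(P | π⁻¹γ)`. -/
def projEntropy {l : ℕ} {E : Type*} [mE : MeasurableSpace E]
    (π : Sig l → E) (μ : Measure (Sig l)) : ℝ :=
  condEntropyPart μ cylP (MeasurableSpace.comap (fun x => π (shift x)) mE)
    - condEntropyPart μ cylP (MeasurableSpace.comap π mE)

/-- `itIm S K x n = S_{x 0} ∘ ⋯ ∘ S_{x (n-1)} (K)`. -/
def itIm {l : ℕ} {E : Type*} (S : Fin l → E → E) (K : Set E) : Sig l → ℕ → Set E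
  | _, 0 => K
  | x, n + 1 => S (x 0) '' itIm S K (shift x) n

/-- The half-open unit cube `[0,1)^d + α` of the partition `𝒬` of `ℝ^d`. -/
def cube (d : ℕ) (α : Fin d → ℤ) : Set (EuclideanSpace ℝ (Fin d)) :=
  {x | ∀ i, (α i : ℝ) ≤ x i ∧ x i < (α i : ℝ) + 1}

/-- Birkhoff sum `S_n g (x) = ∑_{i<n} g(σ^i x)`. -/
def birk {l : ℕ} (g : Sig l → ℝ) (n : ℕ) (x : Sig l) : ℝ :=
  ∑ i ∈ Finset.range n, g (shift^[i] x)

/-- The partition function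
`∑_{Q ∈ 𝒬_n, Q ∩ K ≠ ∅} sup_{α ∈ π⁻¹(Q ∩ K)} exp((S_n f∘π)(α))`,
where `𝒬_n = {Aⁿ Q : Q ∈ 𝒬}`; cubes not meeting `K` contribute `0`. -/
def Zsum {d l : ℕ} (A : EuclideanSpace ℝ (Fin d) →L[ℝ] EuclideanSpace ℝ (Fin d))
    (K : Set (EuclideanSpace ℝ (Fin d))) (π : Sig l → EuclideanSpace ℝ (Fin d))
    (f : EuclideanSpace ℝ (Fin d) → ℝ) (n : ℕ) : ℝ :=
  ∑' α : Fin d → ℤ,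
    ⨆ β ∈ π ⁻¹' ((⇑(A ^ n) '' cube d α) ∩ K), Real.exp (birk (fun y => f (π y)) n β)

/-! ### Inequalities for the entropy function -/

/-- Euclidean space `ℝ^d`. -/
abbrev EE (d : ℕ) := EuclideanSpace ℝ (Fin d)

/-- The volume of the closed unit ball of `ℝ^d`, the normalizing factor of smoothed entropy. -/
def ballVol (d : ℕ) : ℝ := (volume : Measure (EE d)).real (Metric.closedBall 0 1)

lemma ballVol_pos (d : ℕ) : 0 < ballVol d := by
  unfold ballVol Measure.real
  refine ENNReal.toReal_pos ?_ measure_closedBall_lt_top.ne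
  exact (Metric.measure_closedBall_pos volume _ one_pos).ne'

lemma negMulLog_sum_le {ι : Type*} (s : Finset ι) (a : ι → ℝ) (ha : ∀ i ∈ s, 0 ≤ a i) :
    Real.negMulLog (∑ i ∈ s, a i) ≤ ∑ i ∈ s, Real.negMulLog (a i) := by
  unfold Real.negMulLog
  rw [← Finset.sum_neg_distrib, Finset.sum_mul]
  refine Finset.sum_le_sum fun i hi => ?_
  rcases (ha i hi).eq_or_lt with h | h
  · simp [← h]
  · have h2 : a i ≤ ∑ i ∈ s, a i := Finset.single_le_sum ha hi
    have := Real.log_le_log h h2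
    nlinarith

/-- Splitting a mass into at most `κ` nonzero parts raises the entropy by at most the mass times
`log κ`. -/
lemma sum_negMulLog_le {ι : Type*} [Fintype ι] (a : ι → ℝ) (ha : ∀ i, 0 ≤ a i) (κ : ℕ)
    (T : Finset ι) (hT : ∀ i, a i ≠ 0 → i ∈ T) (hTκ : T.card ≤ κ) :
    ∑ i, Real.negMulLog (a i) ≤ Real.negMulLog (∑ i, a i) + (∑ i, a i) * Real.log κ := by
  have e1 : ∑ i, Real.negMulLog (a i) = ∑ i ∈ T, Real.negMulLog (a i) := by
    symm
    refine Finset.sum_subset (Finset.subset_univ _) fun i _ hi => ?_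
    have : a i = 0 := by by_contra h; exact hi (hT i h)
    simp [this]
  have e2 : ∑ i, a i = ∑ i ∈ T, a i := by
    symm
    refine Finset.sum_subset (Finset.subset_univ _) fun i _ hi => ?_
    by_contra h; exact hi (hT i h)
  rw [e1, e2]
  rcases T.eq_empty_or_nonempty with rfl | hne
  · simp
  have hc : (0 : ℝ) < T.card := by exact_mod_cast hne.card_pos
  have hS : 0 ≤ ∑ i ∈ T, a i := Finset.sum_nonneg fun i _ => ha i
  have J := Real.concaveOn_negMulLog.le_map_sum (t := T) (w := fun _ => (T.card : ℝ)⁻¹) (p := a)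
    (fun i _ => by positivity) (by simp [hc.ne']) (fun i _ => ha i)
  simp only [smul_eq_mul, ← Finset.mul_sum] at J
  rw [Real.negMulLog_mul] at J
  have h3 : Real.negMulLog (T.card : ℝ)⁻¹ = (T.card : ℝ)⁻¹ * Real.log T.card := by
    simp [Real.negMulLog, Real.log_inv]
  rw [h3] at J
  have J2 := mul_le_mul_of_nonneg_left J hc.le
  have h4 : (T.card : ℝ) * ((T.card : ℝ)⁻¹ * ∑ i ∈ T, Real.negMulLog (a i))
      = ∑ i ∈ T, Real.negMulLog (a i) := by field_simp
  have h5 : (T.card : ℝ) * ((∑ i ∈ T, a i) * ((T.card : ℝ)⁻¹ * Real.log T.card) +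
      (T.card : ℝ)⁻¹ * Real.negMulLog (∑ i ∈ T, a i)) =
      (∑ i ∈ T, a i) * Real.log T.card + Real.negMulLog (∑ i ∈ T, a i) := by field_simp
  rw [h4, h5] at J2
  have h6 : Real.log T.card ≤ Real.log κ := Real.log_le_log hc (by exact_mod_cast hTκ)
  nlinarith [mul_le_mul_of_nonneg_left h6 hS]

/-- Uniform continuity in a form that can be integrated: a Lipschitz bound with an error `ε`. -/
lemma negMulLog_approx (ε : ℝ) (hε : 0 < ε) : ∃ C : ℝ, 0 ≤ C ∧
    ∀ x ∈ Icc (0 : ℝ) 1, ∀ y ∈ Icc (0 : ℝ) 1,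
      |Real.negMulLog x - Real.negMulLog y| ≤ ε + C * |x - y| := by
  have hu : UniformContinuousOn Real.negMulLog (Icc (0 : ℝ) 1) :=
    isCompact_Icc.uniformContinuousOn_of_continuous Real.continuous_negMulLog.continuousOn
  rw [Metric.uniformContinuousOn_iff] at hu
  obtain ⟨δ, hδ, h⟩ := hu ε hε
  refine ⟨δ⁻¹, by positivity, fun x hx y hy => ?_⟩
  by_cases hd : dist x y < δ
  · have := h x hx y hy hd
    rw [Real.dist_eq] at this
    have : 0 ≤ δ⁻¹ * |x - y| := by positivity
    linarith
  · rw [Real.dist_eq, not_lt] at hd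
    have h1 : 1 ≤ δ⁻¹ * |x - y| := by
      rw [inv_mul_eq_div, le_div_iff₀ hδ]; linarith
    have hx0 := Real.negMulLog_nonneg hx.1 hx.2
    have hy0 := Real.negMulLog_nonneg hy.1 hy.2
    have hx1 := Real.negMulLog_le_one_sub_self hx.1
    have hy1 := Real.negMulLog_le_one_sub_self hy.1
    have : |Real.negMulLog x - Real.negMulLog y| ≤ 1 := by
      rw [abs_le]; constructor <;> linarith [hx.1, hy.1]
    linarith

/-! ### Smoothed entropy -/

section SmEnt

variable {d : ℕ} {Ω : Type*} [MeasurableSpace Ω]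

/-- The window of the random vector `X` at `s`: the event that `X` is within distance `1` of `s`. -/
def win (X : Ω → EE d) (s : EE d) : Set Ω := {ω | dist (X ω) s ≤ 1}

/-- Smoothed entropy of `X` under `μ`: the integral over all positions `s` of `-t log t`, where `t`
is the mass of the unit window at `s`. Letting `s` range over all of `ℝ^d`, instead of over a
grid, makes the quantity exactly invariant under translations of `X`. -/
def smEnt (μ : Measure Ω) (X : Ω → EE d) : ℝ :=
  ∫ s, Real.negMulLog (μ.real (win X s))

lemma measurableSet_win {X : Ω → EE d} (hX : Measurable X) (s : EE d) :
    MeasurableSet (win X s) :=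
  measurableSet_le (hX.dist measurable_const) measurable_const

lemma measurableSet_win_prod {X : Ω → EE d} (hX : Measurable X) :
    MeasurableSet {p : EE d × Ω | p.2 ∈ win X p.1} :=
  measurableSet_le ((hX.comp measurable_snd).dist measurable_fst) measurable_const

lemma measurable_win_real (μ : Measure Ω) [IsFiniteMeasure μ] {X : Ω → EE d} (hX : Measurable X) :
    Measurable fun s => μ.real (win X s) :=
  (measurable_measure_prodMk_left (measurableSet_win_prod hX)).ennreal_toReal

/-- Tonelli over window positions. -/
lemma win_fubini (μ : Measure Ω) [IsFiniteMeasure μ] {X : Ω → EE d} (hX : Measurable X)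
    {F : Ω → ℝ} (hF : Integrable F μ) :
    Integrable (fun s => ∫ ω in win X s, F ω ∂μ) ∧
      ∫ s, ∫ ω in win X s, F ω ∂μ = ballVol d * ∫ ω, F ω ∂μ := by
  have hm := measurableSet_win_prod hX
  set g : EE d × Ω → ℝ :=
    {p : EE d × Ω | p.2 ∈ win X p.1}.indicator (fun p => F p.2) with hg
  have e2 : ∀ ω, (fun s => g (s, ω)) = (Metric.closedBall (X ω) 1).indicator fun _ => F ω := by
    intro ω; ext s
    simp only [hg, indicator, mem_ofPred_eq, win, Metric.mem_closedBall, dist_comm]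
  have e1 : ∀ s, (fun ω => g (s, ω)) = (win X s).indicator F := by
    intro s; ext ω
    rfl
  have vol : ∀ ω, (volume : Measure (EE d)).real (Metric.closedBall (X ω) 1) = ballVol d := by
    intro ω
    unfold ballVol Measure.real
    rw [Measure.addHaar_closedBall_center]
  have hfin : ∀ ω, (volume : Measure (EE d)) (Metric.closedBall (X ω) 1) ≠ ⊤ :=
    fun ω => measure_closedBall_lt_top.ne
  have hsm : AEStronglyMeasurable g ((volume : Measure (EE d)).prod μ) :=
    (hF.1.comp_snd).indicator hm
  have hint : Integrable g ((volume : Measure (EE d)).prod μ) := by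
    rw [integrable_prod_iff' hsm]
    constructor
    · refine Eventually.of_forall fun ω => ?_
      rw [e2]
      exact (integrable_indicator_iff measurableSet_closedBall).2
        (integrableOn_const (hfin ω))
    · have : (fun ω => ∫ s, ‖g (s, ω)‖) = fun ω => ballVol d * ‖F ω‖ := by
        ext ω
        have : (fun s => ‖g (s, ω)‖) =
            (Metric.closedBall (X ω) 1).indicator fun _ => ‖F ω‖ := by
          ext s
          rw [show g (s, ω) = (fun s => g (s, ω)) s from rfl, e2, norm_indicator_eq_indicator_norm]
        rw [this, integral_indicator measurableSet_closedBall, setIntegral_const, vol, smul_eq_mul]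
      rw [this]
      exact hF.norm.const_mul _
  have h1 : ∀ s, ∫ ω in win X s, F ω ∂μ = ∫ ω, g (s, ω) ∂μ := by
    intro s
    rw [e1, integral_indicator (measurableSet_win hX s)]
  simp_rw [h1]
  refine ⟨hint.integral_prod_left, ?_⟩
  rw [integral_integral_swap (f := fun s ω => g (s, ω)) hint, ← integral_const_mul]
  congr 1; ext ω
  rw [e2, integral_indicator measurableSet_closedBall, setIntegral_const, vol, smul_eq_mul]

lemma win_real_integral (μ : Measure Ω) [IsFiniteMeasure μ] {X : Ω → EE d} (hX : Measurable X) :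
    Integrable (fun s => μ.real (win X s)) ∧
      ∫ s, μ.real (win X s) = ballVol d * μ.real univ := by
  have := win_fubini μ hX (integrable_const (1 : ℝ))
  simpa using this

lemma smEnt_integrable (μ : Measure Ω) [IsFiniteMeasure μ] {X : Ω → EE d} (hX : Measurable X)
    {R : ℝ} (hR : ∀ ω, ‖X ω‖ ≤ R) :
    Integrable fun s => Real.negMulLog (μ.real (win X s)) := by
  have hmeas : Measurable fun s => Real.negMulLog (μ.real (win X s)) :=
    Real.continuous_negMulLog.measurable.comp (measurable_win_real μ hX)
  obtain ⟨C, hC⟩ := (isCompact_Icc (a := (0 : ℝ)) (b := μ.real univ)).exists_bound_of_continuousOn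
    Real.continuous_negMulLog.continuousOn
  have hb : ∀ s, ‖Real.negMulLog (μ.real (win X s))‖ ≤ C := fun s =>
    hC _ ⟨measureReal_nonneg, measureReal_mono (subset_univ _)⟩
  have : IntegrableOn (fun s => Real.negMulLog (μ.real (win X s)))
      (Metric.closedBall (0 : EE d) (R + 1)) :=
    Measure.integrableOn_of_bounded measure_closedBall_lt_top.ne hmeas.aestronglyMeasurable
      (Eventually.of_forall hb)
  refine this.integrable_of_forall_notMem_eq_zero fun s hs => ?_
  have : win X s = ∅ := by
    ext ω
    simp only [win, mem_ofPred_eq, mem_empty_iff_false, iff_false, not_le]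
    simp only [Metric.mem_closedBall, dist_zero_right, not_le] at hs
    have h2 := norm_sub_norm_le s (X ω)
    rw [dist_comm, dist_eq_norm]
    linarith [hR ω]
  simp [this]

lemma smEnt_nonneg (μ : Measure Ω) [IsProbabilityMeasure μ] (X : Ω → EE d) : 0 ≤ smEnt μ X :=
  integral_nonneg fun _ => Real.negMulLog_nonneg measureReal_nonneg measureReal_le_one

lemma smEnt_add_const (μ : Measure Ω) (X : Ω → EE d) (c : EE d) :
    smEnt μ (fun ω => X ω + c) = smEnt μ X := by
  unfold smEnt
  have : ∀ s, win (fun ω => X ω + c) s = win X (s - c) := by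
    intro s; ext ω
    simp only [win, mem_ofPred_eq, dist_eq_norm]
    rw [show X ω + c - s = X ω - (s - c) by abel]
  simp_rw [this]
  exact integral_sub_right_eq_self (fun s => Real.negMulLog (μ.real (win X s))) c

lemma smEnt_congr {μ : Measure Ω} {X Y : Ω → EE d} (h : X =ᵐ[μ] Y) : smEnt μ X = smEnt μ Y := by
  unfold smEnt
  congr 1; ext s
  congr 1
  refine measureReal_congr ?_
  filter_upwards [h] with ω hω
  have : (ω ∈ win X s) = (ω ∈ win Y s) := by simp [win, hω]
  exact this

lemma smEnt_map {Ω' : Type*} [MeasurableSpace Ω'] (μ : Measure Ω) {T : Ω → Ω'} (hT : Measurable T)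
    {X : Ω' → EE d} (hX : Measurable X) : smEnt (μ.map T) X = smEnt μ (fun ω => X (T ω)) := by
  unfold smEnt
  congr 1; ext s
  rw [map_measureReal_apply hT (measurableSet_win hX s)]
  rfl

lemma smEnt_smul (μ : Measure Ω) [IsProbabilityMeasure μ] {X : Ω → EE d} (hX : Measurable X)
    {R : ℝ} (hR : ∀ ω, ‖X ω‖ ≤ R) (p : ENNReal) :
    smEnt (p • μ) X = p.toReal * smEnt μ X + Real.negMulLog p.toReal * ballVol d := by
  unfold smEnt
  have e : ∀ s, Real.negMulLog ((p • μ).real (win X s)) =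
      p.toReal * Real.negMulLog (μ.real (win X s)) +
        Real.negMulLog p.toReal * μ.real (win X s) := by
    intro s
    rw [measureReal_ennreal_smul_apply, Real.negMulLog_mul]
    ring
  simp_rw [e]
  obtain ⟨h1, h2⟩ := win_real_integral μ hX
  rw [integral_add ((smEnt_integrable μ hX hR).const_mul _) (h1.const_mul _),
    integral_const_mul, integral_const_mul, h2]
  simp

/-- The mass of a set is the sum of its masses along the pieces of a finite partition. -/
lemma sum_restrict_win {J : Type*} [Fintype J] (μ : Measure Ω) [IsFiniteMeasure μ]
    (P : J → Set Ω) (hPm : ∀ j, MeasurableSet (P j)) (hPd : Pairwise (Function.onFun Disjoint P))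
    (hPu : ⋃ j, P j = univ) {W : Set Ω} (hW : MeasurableSet W) :
    ∑ j, (μ.restrict (P j)).real W = μ.real W := by
  have : W = ⋃ j ∈ (Finset.univ : Finset J), W ∩ P j := by
    simp [← inter_iUnion, hPu]
  conv_rhs => rw [this]
  rw [measureReal_biUnion_finset (fun i _ j _ hij =>
    ((hPd hij).mono inter_subset_right inter_subset_right)) (fun j _ => hW.inter (hPm j))]
  refine Finset.sum_congr rfl fun j _ => ?_
  rw [measureReal_restrict_apply hW]

lemma smEnt_le_sum_restrict {J : Type*} [Fintype J] (μ : Measure Ω) [IsFiniteMeasure μ]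
    (P : J → Set Ω) (hPm : ∀ j, MeasurableSet (P j)) (hPd : Pairwise (Function.onFun Disjoint P))
    (hPu : ⋃ j, P j = univ) {X : Ω → EE d} (hX : Measurable X) {R : ℝ} (hR : ∀ ω, ‖X ω‖ ≤ R) :
    smEnt μ X ≤ ∑ j, smEnt (μ.restrict (P j)) X := by
  unfold smEnt
  rw [← integral_finsetSum _ fun j _ => smEnt_integrable _ hX hR]
  refine integral_mono (smEnt_integrable _ hX hR)
    (integrable_finsetSum _ fun j _ => smEnt_integrable _ hX hR) fun s => ?_
  simp only
  rw [← sum_restrict_win μ P hPm hPd hPu (measurableSet_win hX s)]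
  exact negMulLog_sum_le _ _ fun _ _ => measureReal_nonneg

/-- If every unit window of `X` meets at most `κ` pieces of a partition, then restricting to the
pieces raises the smoothed entropy by at most `log κ` per unit of mass and of ball volume. -/
lemma sum_restrict_smEnt_le {J : Type*} [Fintype J] (μ : Measure Ω) [IsFiniteMeasure μ]
    (P : J → Set Ω) (hPm : ∀ j, MeasurableSet (P j)) (hPd : Pairwise (Function.onFun Disjoint P))
    (hPu : ⋃ j, P j = univ) {X : Ω → EE d} (hX : Measurable X) {R : ℝ} (hR : ∀ ω, ‖X ω‖ ≤ R)
    (κ : ℕ) (T : EE d → Finset J) (hT : ∀ s j, (P j ∩ win X s).Nonempty → j ∈ T s)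
    (hTκ : ∀ s, (T s).card ≤ κ) :
    ∑ j, smEnt (μ.restrict (P j)) X ≤ smEnt μ X + ballVol d * μ.real univ * Real.log κ := by
  obtain ⟨h1, h2⟩ := win_real_integral μ hX
  rw [← h2, ← integral_mul_const]
  unfold smEnt
  rw [← integral_finsetSum _ fun j _ => smEnt_integrable _ hX hR,
    ← integral_add (smEnt_integrable _ hX hR) (h1.mul_const _)]
  refine integral_mono (integrable_finsetSum _ fun j _ => smEnt_integrable _ hX hR)
    ((smEnt_integrable _ hX hR).add (h1.mul_const _)) fun s => ?_
  simp only
  rw [← sum_restrict_win μ P hPm hPd hPu (measurableSet_win hX s)]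
  refine sum_negMulLog_le _ (fun _ => measureReal_nonneg) κ (T s) (fun j hj => hT s j ?_) (hTκ s)
  by_contra hne
  rw [not_nonempty_iff_eq_empty] at hne
  apply hj
  rw [measureReal_restrict_apply (measurableSet_win hX s), inter_comm, hne]
  simp

lemma smEnt_concave (μ : ℕ → Measure Ω) [∀ i, IsProbabilityMeasure (μ i)] {X : Ω → EE d}
    (hX : Measurable X) {R : ℝ} (hR : ∀ ω, ‖X ω‖ ≤ R) (n : ℕ) (hn : 0 < n) :
    (n : ℝ)⁻¹ * ∑ i ∈ Finset.range n, smEnt (μ i) X ≤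
      smEnt ((n : ENNReal)⁻¹ • ∑ i ∈ Finset.range n, μ i) X := by
  have hn' : (n : ENNReal)⁻¹ ≠ ⊤ := by simp [hn.ne']
  have : IsFiniteMeasure ((n : ENNReal)⁻¹ • ∑ i ∈ Finset.range n, μ i) :=
    Measure.smul_finite _ hn'
  have hnr : (0 : ℝ) < n := by exact_mod_cast hn
  unfold smEnt
  rw [← integral_finsetSum _ fun j _ => smEnt_integrable _ hX hR, ← integral_const_mul]
  refine integral_mono ((integrable_finsetSum _ fun j _ => smEnt_integrable _ hX hR).const_mul _)
    (smEnt_integrable _ hX hR) fun s => ?_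
  simp only
  have J := Real.concaveOn_negMulLog.le_map_sum (t := Finset.range n) (w := fun _ => (n : ℝ)⁻¹)
    (p := fun i => (μ i).real (win X s))
    (fun i _ => by positivity) (by simp [hnr.ne']) (fun i _ => measureReal_nonneg)
  simp only [smul_eq_mul, ← Finset.mul_sum] at J
  have e : ((n : ENNReal)⁻¹ • ∑ i ∈ Finset.range n, μ i).real (win X s) =
      (n : ℝ)⁻¹ * ∑ i ∈ Finset.range n, (μ i).real (win X s) := by
    rw [measureReal_ennreal_smul_apply]
    congr 1
    · simp
    · simp only [Measure.real, Measure.coe_finsetSum, Finset.sum_apply]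
      rw [ENNReal.toReal_sum fun i _ => measure_ne_top _ _]
  rw [e]
  exact J

end SmEnt

/-! ### Conditional entropy as a limit of smoothed entropies -/

/-- On one window: if `φ` is `L¹`-close to a function `h` that is nearly equal to the constant
`c₀`, then `-t log t` at the mean of `φ` is close to the mean of `-φ log φ`. -/
lemma local_entropy_est {Ω : Type*} [MeasurableSpace Ω] (μ : Measure Ω) [IsFiniteMeasure μ]
    {φ h : Ω → ℝ} (hφ : Integrable φ μ) (hh : Integrable h μ) (h01 : ∀ᵐ ω ∂μ, φ ω ∈ Icc (0 : ℝ) 1)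
    {ε C δ c₀ : ℝ} (hC : 0 ≤ C)
    (happ : ∀ x ∈ Icc (0 : ℝ) 1, ∀ y ∈ Icc (0 : ℝ) 1,
      |Real.negMulLog x - Real.negMulLog y| ≤ ε + C * |x - y|)
    (hδ : ∀ᵐ ω ∂μ, |h ω - c₀| ≤ δ) :
    |μ.real univ * Real.negMulLog ((∫ ω, φ ω ∂μ) / μ.real univ) - ∫ ω, Real.negMulLog (φ ω) ∂μ|
      ≤ ε * μ.real univ + 2 * C * (∫ ω, |φ ω - h ω| ∂μ + δ * μ.real univ) := by
  rcases eq_zero_or_neZero μ with rfl | hne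
  · simp
  set a := μ.real univ with ha
  have ha0 : 0 < a := measureReal_univ_pos
  set r := (∫ ω, φ ω ∂μ) / a with hr
  have hra : r * a = ∫ ω, φ ω ∂μ := by rw [hr]; field_simp
  have hr01 : r ∈ Icc (0 : ℝ) 1 := by
    constructor
    · exact div_nonneg (integral_nonneg_of_ae (h01.mono fun ω h => h.1)) ha0.le
    · rw [hr, div_le_one ha0]
      calc ∫ ω, φ ω ∂μ ≤ ∫ ω, (1 : ℝ) ∂μ :=
            integral_mono_ae hφ (integrable_const _) (h01.mono fun ω h => h.2)
        _ = a := by simp [ha]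
  have hηi : Integrable (fun ω => Real.negMulLog (φ ω)) μ := by
    refine Integrable.mono' (integrable_const (1 : ℝ))
      (Real.continuous_negMulLog.comp_aestronglyMeasurable hφ.1) (h01.mono fun ω h => ?_)
    rw [Real.norm_eq_abs, abs_of_nonneg (Real.negMulLog_nonneg h.1 h.2)]
    linarith [Real.negMulLog_le_one_sub_self h.1, h.1]
  have hi1 : Integrable (fun ω => |r - φ ω|) μ := ((integrable_const r).sub hφ).abs
  have hi2 : Integrable (fun ω => |φ ω - c₀|) μ := (hφ.sub (integrable_const c₀)).abs
  have hi3 : Integrable (fun ω => |φ ω - h ω|) μ := (hφ.sub hh).abs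
  have s1 : ∫ ω, |φ ω - c₀| ∂μ ≤ ∫ ω, |φ ω - h ω| ∂μ + δ * a := by
    calc ∫ ω, |φ ω - c₀| ∂μ ≤ ∫ ω, (|φ ω - h ω| + δ) ∂μ := by
          refine integral_mono_ae hi2 (hi3.add (integrable_const _)) (hδ.mono fun ω h' => ?_)
          exact (abs_sub_le (φ ω) (h ω) c₀).trans (by simp only; linarith)
      _ = _ := by
          rw [integral_add hi3 (integrable_const _)]
          simp [ha, mul_comm]
  have s2 : |r - c₀| * a ≤ ∫ ω, |φ ω - c₀| ∂μ := by
    have : (r - c₀) * a = ∫ ω, (φ ω - c₀) ∂μ := by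
      rw [integral_sub hφ (integrable_const _), sub_mul, hra]
      simp [ha, mul_comm]
    calc |r - c₀| * a = |(r - c₀) * a| := by rw [abs_mul, abs_of_pos ha0]
      _ ≤ _ := by rw [this]; exact abs_integral_le_integral_abs
  have s3 : ∫ ω, |r - φ ω| ∂μ ≤ 2 * ∫ ω, |φ ω - c₀| ∂μ := by
    calc ∫ ω, |r - φ ω| ∂μ ≤ ∫ ω, (|r - c₀| + |φ ω - c₀|) ∂μ := by
          refine integral_mono hi1 ((integrable_const _).add hi2) fun ω => ?_
          have := abs_sub_le r c₀ (φ ω)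
          rw [abs_sub_comm c₀] at this
          exact this
      _ = |r - c₀| * a + ∫ ω, |φ ω - c₀| ∂μ := by
          rw [integral_add (integrable_const _) hi2]
          simp [ha, mul_comm]
      _ ≤ _ := by linarith
  have s4 : a * Real.negMulLog r - ∫ ω, Real.negMulLog (φ ω) ∂μ =
      ∫ ω, (Real.negMulLog r - Real.negMulLog (φ ω)) ∂μ := by
    rw [integral_sub (integrable_const _) hηi]
    simp [ha]
  rw [s4]
  calc |∫ ω, (Real.negMulLog r - Real.negMulLog (φ ω)) ∂μ|
      ≤ ∫ ω, |Real.negMulLog r - Real.negMulLog (φ ω)| ∂μ := abs_integral_le_integral_abs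
    _ ≤ ∫ ω, (ε + C * |r - φ ω|) ∂μ := by
        refine integral_mono_ae ((integrable_const _).sub hηi).abs
          ((integrable_const _).add (hi1.const_mul _)) (h01.mono fun ω h' => ?_)
        exact happ r hr01 _ h'
    _ = ε * a + C * ∫ ω, |r - φ ω| ∂μ := by
        rw [integral_add (integrable_const _) (hi1.const_mul _), integral_const_mul]
        simp [ha, mul_comm]
    _ ≤ _ := by nlinarith

section CondEnt

variable {d : ℕ} {Ω : Type*} {m' : MeasurableSpace Ω} [mΩ : MeasurableSpace Ω]

lemma condExp_indicator_mem_Icc (μ : Measure Ω) [IsProbabilityMeasure μ] {P : Set Ω}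
    (hP : MeasurableSet P) (hm : m' ≤ mΩ) :
    ∀ᵐ ω ∂μ, (μ[P.indicator (fun _ => (1 : ℝ)) | m']) ω ∈ Icc (0 : ℝ) 1 := by
  have hi : Integrable (P.indicator (fun _ => (1 : ℝ))) μ := (integrable_const 1).indicator hP
  have h0 := condExp_nonneg (m := m') (μ := μ)
    (Eventually.of_forall (fun ω => indicator_nonneg (fun _ _ => zero_le_one) ω) :
      0 ≤ᵐ[μ] P.indicator (fun _ => (1 : ℝ)))
  have h1 := condExp_mono (m := m') (μ := μ) hi (integrable_const (1 : ℝ))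
    (Eventually.of_forall fun ω => indicator_le_self' (fun _ _ => zero_le_one) ω)
  rw [condExp_const hm] at h1
  filter_upwards [h0, h1] with ω h0 h1
  exact ⟨h0, h1⟩

/-- `∫_P -log E(1_P|m') = ∫ -E(1_P|m') log E(1_P|m')`: pull the `m'`-measurable factor out. The
integrals are computed in `ℝ≥0∞`, since the logarithm need not be bounded. -/
lemma integral_neg_log_condExp (μ : Measure Ω) [IsProbabilityMeasure μ] {P : Set Ω}
    (hP : MeasurableSet P) (hm : m' ≤ mΩ) :
    ∫ ω in P, -Real.log ((μ[P.indicator (fun _ => (1 : ℝ)) | m']) ω) ∂μ =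
      ∫ ω, Real.negMulLog ((μ[P.indicator (fun _ => (1 : ℝ)) | m']) ω) ∂μ := by
  have hi : Integrable (P.indicator (fun _ => (1 : ℝ))) μ := (integrable_const 1).indicator hP
  have h01 := condExp_indicator_mem_Icc μ hP hm
  set φ := μ[P.indicator (fun _ => (1 : ℝ)) | m'] with hφdef
  have hφm' : Measurable[m'] φ := stronglyMeasurable_condExp.measurable
  have hφm : Measurable φ := hφm'.mono hm le_rfl
  have hφi : Integrable φ μ := integrable_condExp
  have hFm' : Measurable[m'] fun ω => ENNReal.ofReal (-Real.log (φ ω)) :=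
    (((Real.measurable_log.comp hφm').neg).ennreal_ofReal)
  have hFm : Measurable fun ω => ENNReal.ofReal (-Real.log (φ ω)) := hFm'.mono hm le_rfl
  have key : (μ.restrict P).trim hm = (μ.withDensity fun ω => ENNReal.ofReal (φ ω)).trim hm := by
    refine @Measure.ext _ m' _ _ fun s hs => ?_
    rw [trim_measurableSet_eq hm hs, trim_measurableSet_eq hm hs,
      Measure.restrict_apply (hm s hs), withDensity_apply _ (hm s hs),
      ← ofReal_integral_eq_lintegral_ofReal hφi.integrableOn
        (ae_restrict_of_ae (h01.mono fun ω h => h.1)), hφdef, setIntegral_condExp hm hi hs,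
      integral_indicator hP, Measure.restrict_restrict hP]
    simp [inter_comm]
  have hl1 : Measurable fun ω => -Real.log (φ ω) := (Real.measurable_log.comp hφm).neg
  have hl2 : Measurable fun ω => Real.negMulLog (φ ω) :=
    Real.continuous_negMulLog.measurable.comp hφm
  rw [integral_eq_lintegral_of_nonneg_ae
      (ae_restrict_of_ae (h01.mono fun ω h => by
        simpa using Real.log_nonpos h.1 h.2))
      hl1.aestronglyMeasurable,
    integral_eq_lintegral_of_nonneg_ae (h01.mono fun ω h => Real.negMulLog_nonneg h.1 h.2)
      hl2.aestronglyMeasurable]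
  congr 1
  rw [← lintegral_trim hm hFm', key, lintegral_trim hm hFm',
    lintegral_withDensity_eq_lintegral_mul _ hφm.ennreal_ofReal hFm]
  refine lintegral_congr_ae (h01.mono fun ω h => ?_)
  simp only [Pi.mul_apply, Real.negMulLog]
  rw [← ENNReal.ofReal_mul h.1]
  congr 1; ring

lemma condEntropyPart_eq {J : Type*} [Fintype J] (μ : Measure Ω) [IsProbabilityMeasure μ]
    (P : J → Set Ω) (hPm : ∀ j, MeasurableSet (P j)) (hm : m' ≤ mΩ) :
    condEntropyPart μ P m' =
      ∑ j, ∫ ω, Real.negMulLog ((μ[(P j).indicator (fun _ => (1 : ℝ)) | m']) ω) ∂μ :=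
  Finset.sum_congr rfl fun j _ => integral_neg_log_condExp μ (hPm j) hm

lemma condEntropyPart_nonneg {J : Type*} [Fintype J] (μ : Measure Ω) [IsProbabilityMeasure μ]
    (P : J → Set Ω) (hPm : ∀ j, MeasurableSet (P j)) (hm : m' ≤ mΩ) :
    0 ≤ condEntropyPart μ P m' := by
  rw [condEntropyPart_eq μ P hPm hm]
  refine Finset.sum_nonneg fun j _ => integral_nonneg_of_ae ?_
  filter_upwards [condExp_indicator_mem_Icc μ (hPm j) hm] with ω h
  exact Real.negMulLog_nonneg h.1 h.2

lemma condEntropyPart_le {J : Type*} [Fintype J] (μ : Measure Ω) [IsProbabilityMeasure μ]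
    (P : J → Set Ω) (hPm : ∀ j, MeasurableSet (P j)) (hm : m' ≤ mΩ) :
    condEntropyPart μ P m' ≤ Fintype.card J := by
  rw [condEntropyPart_eq μ P hPm hm]
  calc _ ≤ ∑ j : J, (1 : ℝ) := by
        refine Finset.sum_le_sum fun j _ => ?_
        have h01 := condExp_indicator_mem_Icc μ (hPm j) hm
        calc _ ≤ ∫ ω, (1 : ℝ) ∂μ := by
              refine integral_mono_of_nonneg (h01.mono fun ω h => Real.negMulLog_nonneg h.1 h.2)
                (integrable_const _) (h01.mono fun ω h => ?_)
              have := Real.negMulLog_le_one_sub_self h.1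
              simp only
              linarith [h.1]
          _ = 1 := by simp
    _ = _ := by simp

/-- A martingale-convergence statement for windows: if `L k` expands distances at a rate `1 / r k`
tending to infinity, then the unit windows of `L k ∘ Y` are small in terms of `Y`, so that the
fraction of a window occupied by `P` approximates `E(1_P | Y)`. The latter is approximated in `L¹`
by a uniformly continuous function of `Y`. -/
lemma tendsto_window_entropy (μ : Measure Ω) [IsProbabilityMeasure μ] {P : Set Ω}
    (hP : MeasurableSet P) {Y : Ω → EE d} (hY : Measurable Y) (L : ℕ → EE d →L[ℝ] EE d)
    (r : ℕ → ℝ) (hr : Tendsto r atTop (nhds 0)) (hLr : ∀ k y, ‖y‖ ≤ r k * ‖L k y‖)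
    (hr0 : ∀ k, 0 ≤ r k) :
    (∀ k, Integrable fun s => μ.real (win (fun ω => L k (Y ω)) s) *
      Real.negMulLog ((μ.restrict P).real (win (fun ω => L k (Y ω)) s) /
        μ.real (win (fun ω => L k (Y ω)) s))) ∧
    Tendsto (fun k => ∫ s, μ.real (win (fun ω => L k (Y ω)) s) *
      Real.negMulLog ((μ.restrict P).real (win (fun ω => L k (Y ω)) s) /
        μ.real (win (fun ω => L k (Y ω)) s))) atTop
      (nhds (ballVol d * ∫ ω, Real.negMulLog
        ((μ[P.indicator (fun _ => (1 : ℝ)) | MeasurableSpace.comap Y inferInstance]) ω) ∂μ)) := by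
  have hm := hY.comap_le
  have hi : Integrable (P.indicator (fun _ => (1 : ℝ))) μ := (integrable_const 1).indicator hP
  have h01 := condExp_indicator_mem_Icc μ hP hm
  have hset : ∀ s, MeasurableSet[MeasurableSpace.comap Y inferInstance] s →
      ∫ ω in s, (μ[P.indicator (fun _ => (1 : ℝ)) | MeasurableSpace.comap Y inferInstance]) ω ∂μ
        = (μ.restrict P).real s := by
    intro s hs
    rw [setIntegral_condExp hm hi hs, integral_indicator hP, Measure.restrict_restrict hP]
    simp [measureReal_restrict_apply (hm s hs), inter_comm]
  have hsm : StronglyMeasurable[MeasurableSpace.comap Y inferInstance]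
    (μ[P.indicator (fun _ => (1 : ℝ)) | MeasurableSpace.comap Y inferInstance]) :=
    stronglyMeasurable_condExp
  have hφi : Integrable
    (μ[P.indicator (fun _ => (1 : ℝ)) | MeasurableSpace.comap Y inferInstance]) μ :=
    integrable_condExp
  obtain ⟨ψ, hψm, hψ⟩ := hsm.exists_eq_measurable_comp
  generalize μ[P.indicator (fun _ => (1 : ℝ)) | MeasurableSpace.comap Y inferInstance] = φ at *
  have hX : ∀ k, Measurable fun ω => L k (Y ω) := fun k => (L k).continuous.measurable.comp hY
  have hWm : ∀ k s, MeasurableSet[MeasurableSpace.comap Y inferInstance]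
      (win (fun ω => L k (Y ω)) s) := fun k s =>
    ⟨{y | dist (L k y) s ≤ 1}, measurableSet_le
      ((L k).continuous.measurable.dist measurable_const) measurable_const, rfl⟩
  have hηi : Integrable (fun ω => Real.negMulLog (φ ω)) μ := by
    refine Integrable.mono' (integrable_const (1 : ℝ))
      (Real.continuous_negMulLog.comp_aestronglyMeasurable hφi.1) (h01.mono fun ω h => ?_)
    rw [Real.norm_eq_abs, abs_of_nonneg (Real.negMulLog_nonneg h.1 h.2)]
    linarith [Real.negMulLog_le_one_sub_self h.1, h.1]
  have hint : ∀ k, Integrable fun s => μ.real (win (fun ω => L k (Y ω)) s) *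
      Real.negMulLog ((μ.restrict P).real (win (fun ω => L k (Y ω)) s) /
        μ.real (win (fun ω => L k (Y ω)) s)) := by
    intro k
    refine Integrable.mono' (win_real_integral μ (hX k)).1
      ((measurable_win_real μ (hX k)).mul (Real.continuous_negMulLog.measurable.comp
        ((measurable_win_real _ (hX k)).div (measurable_win_real μ (hX k))))).aestronglyMeasurable
      (Eventually.of_forall fun s => ?_)
    have q0 : 0 ≤ (μ.restrict P).real (win (fun ω => L k (Y ω)) s) /
        μ.real (win (fun ω => L k (Y ω)) s) := div_nonneg measureReal_nonneg measureReal_nonneg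
    have q1 : (μ.restrict P).real (win (fun ω => L k (Y ω)) s) /
        μ.real (win (fun ω => L k (Y ω)) s) ≤ 1 := by
      refine div_le_one_of_le₀ ?_ measureReal_nonneg
      rw [measureReal_restrict_apply (measurableSet_win (hX k) s)]
      exact measureReal_mono inter_subset_left
    rw [Real.norm_eq_abs, abs_of_nonneg
      (mul_nonneg measureReal_nonneg (Real.negMulLog_nonneg q0 q1))]
    exact mul_le_of_le_one_right measureReal_nonneg
      (by linarith [Real.negMulLog_le_one_sub_self q0])
  refine ⟨hint, ?_⟩
  rw [Metric.tendsto_atTop]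
  intro ε₀ hε₀
  have hv := ballVol_pos d
  set v := ballVol d
  obtain ⟨C, hC, happ⟩ := negMulLog_approx (ε₀ / (4 * v)) (by positivity)
  set τ := ε₀ / (8 * v * (C + 1)) with hτ
  have hτ0 : 0 < τ := by positivity
  have hψi : Integrable ψ (μ.map Y) := by
    rw [integrable_map_measure hψm.aestronglyMeasurable hY.aemeasurable, ← hψ]
    exact hφi
  obtain ⟨g, hgs, hgapp, hgc, hgi⟩ := hψi.exists_hasCompactSupport_integral_sub_le hτ0
  have hgYi : Integrable (fun ω => g (Y ω)) μ :=
    (integrable_map_measure hgi.1 hY.aemeasurable).1 hgi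
  have hgapp' : ∫ ω, |φ ω - g (Y ω)| ∂μ ≤ τ := by
    have q : AEStronglyMeasurable (fun x => ‖ψ x - g x‖) (μ.map Y) :=
      (hψm.aestronglyMeasurable.sub hgi.1).norm
    rw [integral_map hY.aemeasurable q] at hgapp
    rw [hψ]
    exact hgapp
  have hgu : UniformContinuous g := hgs.uniformContinuous_of_continuous hgc
  obtain ⟨ρ, hρ, hgρ⟩ := Metric.uniformContinuous_iff.1 hgu τ hτ0
  have hev : ∀ᶠ k in atTop, r k < ρ / 4 := hr.eventually_lt_const (by positivity)
  obtain ⟨N, hN⟩ := eventually_atTop.1 hev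
  refine ⟨N, fun k hk => ?_⟩
  obtain ⟨f1, f2⟩ := win_fubini μ (hX k) hηi
  obtain ⟨f3, f4⟩ := win_fubini μ (hX k) (hφi.sub hgYi).abs
  obtain ⟨f5, f6⟩ := win_real_integral μ (hX k)
  rw [Real.dist_eq, ← f2, ← integral_sub (hint k) f1]
  simp only [Pi.sub_apply] at f3 f4
  have pt : ∀ s, |μ.real (win (fun ω => L k (Y ω)) s) *
      Real.negMulLog ((μ.restrict P).real (win (fun ω => L k (Y ω)) s) /
        μ.real (win (fun ω => L k (Y ω)) s)) -
        ∫ ω in win (fun ω => L k (Y ω)) s, Real.negMulLog (φ ω) ∂μ| ≤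
      (ε₀ / (4 * v)) * μ.real (win (fun ω => L k (Y ω)) s) +
        2 * C * (∫ ω in win (fun ω => L k (Y ω)) s, |φ ω - g (Y ω)| ∂μ +
          τ * μ.real (win (fun ω => L k (Y ω)) s)) := by
    intro s
    have hc : ∃ c₀, ∀ ω ∈ win (fun ω => L k (Y ω)) s, |g (Y ω) - c₀| ≤ τ := by
      rcases (win (fun ω => L k (Y ω)) s).eq_empty_or_nonempty with h | ⟨ω₀, h₀⟩
      · exact ⟨0, by simp [h]⟩
      · refine ⟨g (Y ω₀), fun ω hω => (hgρ ?_).le⟩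
        rw [dist_eq_norm]
        have h1 : ‖L k (Y ω - Y ω₀)‖ ≤ 2 := by
          rw [map_sub, ← dist_eq_norm]
          have h2 : dist (L k (Y ω)) s ≤ 1 := hω
          have h3 : dist (L k (Y ω₀)) s ≤ 1 := h₀
          linarith [dist_triangle_right (L k (Y ω)) (L k (Y ω₀)) s]
        have h2 := hLr k (Y ω - Y ω₀)
        have h3 := hN k hk
        nlinarith [hr0 k]
    obtain ⟨c₀, hc₀⟩ := hc
    have := local_entropy_est (μ.restrict (win (fun ω => L k (Y ω)) s)) (φ := φ)
      (h := fun ω => g (Y ω)) hφi.integrableOn hgYi.integrableOn (ae_restrict_of_ae h01) hC happ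
      (ae_restrict_of_forall_mem (measurableSet_win (hX k) s) hc₀)
    rw [hset _ (hWm k s)] at this
    simpa using this
  have hfin : |∫ s, (μ.real (win (fun ω => L k (Y ω)) s) *
      Real.negMulLog ((μ.restrict P).real (win (fun ω => L k (Y ω)) s) /
        μ.real (win (fun ω => L k (Y ω)) s)) -
        ∫ ω in win (fun ω => L k (Y ω)) s, Real.negMulLog (φ ω) ∂μ)| ≤
      (ε₀ / (4 * v)) * v + 2 * C * (v * τ + τ * v) := by
    calc _ ≤ ∫ s, ((ε₀ / (4 * v)) * μ.real (win (fun ω => L k (Y ω)) s) +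
        2 * C * (∫ ω in win (fun ω => L k (Y ω)) s, |φ ω - g (Y ω)| ∂μ +
          τ * μ.real (win (fun ω => L k (Y ω)) s))) :=
          abs_integral_le_integral_abs.trans (integral_mono ((hint k).sub f1).abs
            ((f5.const_mul _).add ((f3.add (f5.const_mul _)).const_mul _)) pt)
      _ = (ε₀ / (4 * v)) * v + 2 * C * (v * ∫ ω, |φ ω - g (Y ω)| ∂μ + τ * v) := by
          have q := f3.add (f5.const_mul τ)
          simp only [Pi.add_def] at q
          rw [integral_add (f5.const_mul _) (q.const_mul _),
            integral_const_mul, integral_const_mul, integral_add f3 (f5.const_mul _),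
            integral_const_mul, f4, f6]
          simp [v]
      _ ≤ _ := by gcongr
  refine hfin.trans_lt ?_
  have e1 : ε₀ / (4 * v) * v = ε₀ / 4 := by field_simp
  have e2 : 2 * C * (v * τ + τ * v) = ε₀ / 2 * (C / (C + 1)) := by
    rw [hτ]; field_simp; ring
  have e3 : C / (C + 1) ≤ 1 := by rw [div_le_one (by linarith)]; linarith
  rw [e1, e2]
  nlinarith

/-- Conditional entropy given `Y` is the limit of the smoothed-entropy gain from restricting to the
pieces of the partition, as `Y` is observed at finer and finer scales `L k`. -/
theorem tendsto_condEntropy {J : Type*} [Fintype J] (μ : Measure Ω) [IsProbabilityMeasure μ]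
    (P : J → Set Ω) (hPm : ∀ j, MeasurableSet (P j)) (hPd : Pairwise (Function.onFun Disjoint P))
    (hPu : ⋃ j, P j = univ) {Y : Ω → EE d} (hY : Measurable Y) {R : ℝ} (hR : ∀ ω, ‖Y ω‖ ≤ R)
    (L : ℕ → EE d →L[ℝ] EE d)
    (r : ℕ → ℝ) (hr : Tendsto r atTop (nhds 0)) (hLr : ∀ k y, ‖y‖ ≤ r k * ‖L k y‖)
    (hr0 : ∀ k, 0 ≤ r k) :
    Tendsto (fun k => ∑ j, smEnt (μ.restrict (P j)) (fun ω => L k (Y ω)) -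
      smEnt μ (fun ω => L k (Y ω))) atTop
      (nhds (ballVol d * condEntropyPart μ P (MeasurableSpace.comap Y inferInstance))) := by
  have hm := hY.comap_le
  rw [condEntropyPart_eq μ P hPm hm, Finset.mul_sum]
  have hT := fun j => tendsto_window_entropy μ (hPm j) hY L r hr hLr hr0
  have := tendsto_finsetSum Finset.univ fun j _ => (hT j).2
  refine this.congr fun k => ?_
  have hX : Measurable fun ω => L k (Y ω) := (L k).continuous.measurable.comp hY
  have hR' : ∀ ω, ‖L k (Y ω)‖ ≤ ‖L k‖ * R := fun ω =>
    ((L k).le_opNorm _).trans (by gcongr; exact hR ω)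
  unfold smEnt
  rw [← integral_finsetSum _ fun j _ => (hT j).1 k,
    ← integral_finsetSum _ fun j _ => smEnt_integrable _ hX hR',
    ← integral_sub (integrable_finsetSum _ fun j _ => smEnt_integrable _ hX hR')
      (smEnt_integrable _ hX hR')]
  congr 1; ext s
  have hs := sum_restrict_win μ P hPm hPd hPu (measurableSet_win hX s)
  set W := win (fun ω => L k (Y ω)) s
  rcases eq_or_ne (μ.real W) 0 with h0 | h0
  · have : ∀ j, (μ.restrict (P j)).real W = 0 := by
      rw [h0, Finset.sum_eq_zero_iff_of_nonneg fun _ _ => measureReal_nonneg] at hs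
      exact fun j => hs j (Finset.mem_univ j)
    simp [h0, this]
  · have e : ∀ j, Real.negMulLog ((μ.restrict (P j)).real W) =
        ((μ.restrict (P j)).real W / μ.real W) * Real.negMulLog (μ.real W) +
        μ.real W * Real.negMulLog ((μ.restrict (P j)).real W / μ.real W) := by
      intro j
      rw [← Real.negMulLog_mul]
      congr 1; field_simp
    simp_rw [e]
    rw [Finset.sum_add_distrib, ← Finset.sum_mul, ← Finset.sum_div, hs, div_self h0]
    ring

end CondEnt

/-! ### The canonical coding of an affine iterated function system -/

/-- `π` codes the points of the affine system `x ↦ A x + c i`: it satisfies the conjugacy relation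
with the shift and is bounded by `R`, while `A` is a contraction with inverse `B`. -/
structure Coding {d l : ℕ} (A B : EE d →L[ℝ] EE d) (c : Fin l → EE d) (π : Sig l → EE d)
    (R : ℝ) : Prop where
  AB : A * B = 1
  BA : B * A = 1
  norm_lt : ‖A‖ < 1
  eqn : ∀ x, π x = A (π (shift x)) + c (x 0)
  bdd : ∀ x, ‖π x‖ ≤ R

lemma continuous_shift {l : ℕ} : Continuous (shift : Sig l → Sig l) :=
  continuous_pi fun n => continuous_apply (n + 1)

lemma measurable_shift {l : ℕ} : Measurable (shift : Sig l → Sig l) :=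
  measurable_pi_lambda _ fun n => measurable_pi_apply (n + 1)

lemma measurableSet_cylP {l : ℕ} (j : Fin l) : MeasurableSet (cylP j : Set (Sig l)) :=
  (measurable_pi_apply (X := fun _ : ℕ => Fin l) 0) (measurableSet_singleton j)

lemma cylP_disjoint {l : ℕ} : Pairwise (Function.onFun Disjoint (cylP : Fin l → Set (Sig l))) := by
  intro i j hij
  refine Set.disjoint_left.2 fun x hx hy => hij ?_
  exact (show x 0 = i from hx).symm.trans hy

lemma cylP_union {l : ℕ} : ⋃ j, (cylP j : Set (Sig l)) = univ :=
  eq_univ_of_forall fun x => mem_iUnion.2 ⟨x 0, rfl⟩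

lemma shift_iterate_apply {l : ℕ} (n : ℕ) (x : Sig l) (k : ℕ) : shift^[n] x k = x (k + n) := by
  induction n generalizing x with
  | zero => rfl
  | succ n ih =>
    rw [Function.iterate_succ_apply, ih]
    change x (k + n + 1) = _
    rw [add_assoc]

lemma clm_pow_norm_le {d : ℕ} (A : EE d →L[ℝ] EE d) (k : ℕ) (y : EE d) :
    ‖(A ^ k) y‖ ≤ ‖A‖ ^ k * ‖y‖ := by
  induction k with
  | zero => simp
  | succ k ih =>
    rw [pow_succ', mul_apply_eq_comp, pow_succ', mul_assoc]
    exact (A.le_opNorm _).trans (mul_le_mul_of_nonneg_left ih (norm_nonneg _))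

namespace Coding

variable {d l : ℕ} {A B : EE d →L[ℝ] EE d} {c : Fin l → EE d} {π : Sig l → EE d} {R : ℝ}

lemma powBA (C : Coding A B c π R) (k : ℕ) (y : EE d) : (B ^ k) ((A ^ k) y) = y := by
  have h : Commute B A := by rw [commute_iff_eq, C.AB, C.BA]
  rw [← mul_apply_eq_comp, ← h.mul_pow, C.BA, one_pow]; rfl

lemma powAB (C : Coding A B c π R) (k : ℕ) (y : EE d) : (A ^ k) ((B ^ k) y) = y := by
  have h : Commute A B := by rw [commute_iff_eq, C.AB, C.BA]
  rw [← mul_apply_eq_comp, ← h.mul_pow, C.AB, one_pow]; rfl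

lemma norm_le (C : Coding A B c π R) (k : ℕ) (y : EE d) : ‖y‖ ≤ ‖A‖ ^ k * ‖(B ^ k) y‖ := by
  have := clm_pow_norm_le A k ((B ^ k) y)
  rwa [C.powAB] at this

/-- Along a common prefix of length `n` the translations cancel and only the linear part remains. -/
lemma sub_eq (C : Coding A B c π R) (n : ℕ) (x y : Sig l) (h : ∀ i < n, x i = y i) :
    π x - π y = (A ^ n) (π (shift^[n] x) - π (shift^[n] y)) := by
  induction n generalizing x y with
  | zero => simp
  | succ n ih =>
    rw [C.eqn x, C.eqn y, h 0 (Nat.succ_pos n), add_sub_add_right_eq_sub, ← map_sub,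
      ih (shift x) (shift y) (fun i hi => h (i + 1) (by omega)), pow_succ',
      mul_apply_eq_comp]
    rfl

lemma dist_le (C : Coding A B c π R) (n : ℕ) (x y : Sig l) (h : ∀ i < n, x i = y i) :
    dist (π x) (π y) ≤ ‖A‖ ^ n * (2 * R) := by
  rw [dist_eq_norm, C.sub_eq n x y h]
  refine (clm_pow_norm_le A n _).trans (mul_le_mul_of_nonneg_left ?_ (by positivity))
  exact (norm_sub_le _ _).trans (by linarith [C.bdd (shift^[n] x), C.bdd (shift^[n] y)])

lemma tendsto_pow (C : Coding A B c π R) : Tendsto (fun n : ℕ => ‖A‖ ^ n) atTop (nhds 0) :=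
  tendsto_pow_atTop_nhds_zero_of_lt_one (norm_nonneg _) C.norm_lt

lemma continuous (C : Coding A B c π R) : Continuous π := by
  rw [continuous_iff_continuousAt]
  intro x
  rw [ContinuousAt, Metric.tendsto_nhds]
  intro ε hε
  have : Tendsto (fun n : ℕ => ‖A‖ ^ n * (2 * R)) atTop (nhds 0) := by
    simpa using C.tendsto_pow.mul_const (2 * R)
  obtain ⟨n, hn⟩ := (this.eventually_lt_const hε).exists
  have hopen : IsOpen {y : Sig l | ∀ i < n, y i = x i} := by
    have : {y : Sig l | ∀ i < n, y i = x i} = ⋂ i ∈ Finset.range n, {y : Sig l | y i = x i} := by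
      ext y; simp
    rw [this]
    refine isOpen_biInter_finset fun i _ => ?_
    exact (isOpen_discrete ({x i} : Set (Fin l))).preimage
      (continuous_apply (A := fun _ : ℕ => Fin l) i)
  filter_upwards [hopen.mem_nhds (show ∀ i < n, x i = x i from fun _ _ => rfl)] with y hy
  exact (C.dist_le n y x hy).trans_lt hn

lemma bddX (C : Coding A B c π R) (k : ℕ) (x : Sig l) : ‖(B ^ k) (π x)‖ ≤ ‖B ^ k‖ * R :=
  ((B ^ k).le_opNorm _).trans (mul_le_mul_of_nonneg_left (C.bdd x) (norm_nonneg _))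

lemma measX (C : Coding A B c π R) (k : ℕ) : Measurable fun x => (B ^ k) (π x) :=
  ((B ^ k).continuous.comp C.continuous).measurable

/-- On a cylinder, `B^(k+1) π` is a translate of `B^k (π ∘ σ)`. -/
lemma smEnt_cyl (C : Coding A B c π R) (μ : Measure (Sig l)) (k : ℕ) (j : Fin l) :
    smEnt (μ.restrict (cylP j)) (fun x => (B ^ (k + 1)) (π x)) =
      smEnt (μ.restrict (cylP j)) (fun x => (B ^ k) (π (shift x))) := by
  rw [← smEnt_add_const _ (fun x => (B ^ k) (π (shift x))) ((B ^ (k + 1)) (c j))]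
  refine smEnt_congr ?_
  filter_upwards [ae_restrict_mem (measurableSet_cylP j)] with x hx
  have hx' : x 0 = j := hx
  rw [C.eqn x, map_add, hx']
  congr 1
  rw [pow_succ, mul_apply_eq_comp, ← mul_apply_eq_comp B A, C.BA]
  rfl

/-- Projection entropy is the limiting increment of the smoothed entropies of `B^k π`: both
conditional entropies in its definition are limits of smoothed-entropy differences, and by
`smEnt_cyl` the two sums over cylinders cancel. -/
theorem tendsto_projEntropy (C : Coding A B c π R) (m : Measure (Sig l)) [IsProbabilityMeasure m]
    (hm : m.map shift = m) :
    Tendsto (fun k : ℕ => smEnt m (fun x => (B ^ (k + 1)) (π x)) -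
      smEnt m (fun x => (B ^ k) (π x))) atTop (nhds (ballVol d * projEntropy π m)) := by
  have t1 := tendsto_condEntropy m cylP measurableSet_cylP cylP_disjoint cylP_union
    (Y := fun x => π (shift x)) (C.continuous.comp continuous_shift).measurable
    (R := R) (fun x => C.bdd _) (fun k => B ^ k) (fun k => ‖A‖ ^ k) C.tendsto_pow C.norm_le
    (fun k => by positivity)
  have t2 := tendsto_condEntropy m cylP measurableSet_cylP cylP_disjoint cylP_union
    (Y := π) C.continuous.measurable
    (R := R) (fun x => C.bdd _) (fun k => B ^ k) (fun k => ‖A‖ ^ k) C.tendsto_pow C.norm_le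
    (fun k => by positivity)
  have t3 := t1.sub ((tendsto_add_atTop_iff_nat 1).2 t2)
  unfold projEntropy
  rw [mul_sub]
  refine t3.congr fun k => ?_
  have e : smEnt m (fun x => (B ^ k) (π (shift x))) = smEnt m (fun x => (B ^ k) (π x)) := by
    rw [← smEnt_map m measurable_shift (C.measX k), hm]
  simp only [C.smEnt_cyl, e]
  ring

theorem tendsto_smEnt_div (C : Coding A B c π R) (m : Measure (Sig l)) [IsProbabilityMeasure m]
    (hm : m.map shift = m) :
    Tendsto (fun k : ℕ => smEnt m (fun x => (B ^ k) (π x)) / k) atTop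
      (nhds (ballVol d * projEntropy π m)) := by
  have h := (C.tendsto_projEntropy m hm).cesaro
  have h0 : Tendsto (fun k : ℕ => smEnt m (fun x => (B ^ 0) (π x)) / (k : ℝ)) atTop (nhds 0) :=
    tendsto_const_div_atTop_nhds_zero_nat _
  have := h.add h0
  rw [add_zero] at this
  refine this.congr fun k => ?_
  rw [Finset.sum_range_sub fun k => smEnt m (fun x => (B ^ k) (π x))]
  ring

lemma smEnt_succ_le (C : Coding A B c π R) (m : Measure (Sig l)) [IsProbabilityMeasure m]
    (k : ℕ) : smEnt m (fun x => (B ^ (k + 1)) (π x)) ≤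
      smEnt (m.map shift) (fun x => (B ^ k) (π x)) + ballVol d * Real.log l := by
  rw [smEnt_map m measurable_shift (C.measX k)]
  refine (smEnt_le_sum_restrict m cylP measurableSet_cylP cylP_disjoint cylP_union
    (C.measX (k + 1)) (C.bddX (k + 1))).trans ?_
  simp only [C.smEnt_cyl]
  have := sum_restrict_smEnt_le m cylP measurableSet_cylP cylP_disjoint cylP_union
    (X := fun x => (B ^ k) (π (shift x)))
    ((C.measX k).comp measurable_shift) (fun x => C.bddX k (shift x)) l (fun _ => Finset.univ)
    (fun _ _ _ => Finset.mem_univ _) (fun _ => by simp)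
  rw [probReal_univ, mul_one] at this
  exact this

/-- Shifting `i` times loses at most `i log l` of entropy per unit of ball volume. -/
lemma smEnt_add_le (C : Coding A B c π R) (m : Measure (Sig l)) [IsProbabilityMeasure m]
    (k i : ℕ) : smEnt m (fun x => (B ^ (k + i)) (π x)) ≤
      smEnt (m.map shift^[i]) (fun x => (B ^ k) (π x)) + i * (ballVol d * Real.log l) := by
  induction i generalizing m with
  | zero => simp
  | succ i ih =>
    have := Measure.isProbabilityMeasure_map (μ := m) measurable_shift.aemeasurable
    have h1 := C.smEnt_succ_le m (k + i)
    have h2 := ih (m.map shift)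
    rw [Measure.map_map (measurable_shift.iterate i) measurable_shift] at h2
    rw [Function.iterate_succ]
    have h3 : ((i + 1 : ℕ) : ℝ) * (ballVol d * Real.log l) =
        i * (ballVol d * Real.log l) + ballVol d * Real.log l := by push_cast; ring
    rw [h3, ← add_assoc, ← add_assoc]
    exact h1.trans (add_le_add_left h2 _)

end Coding

/-! ### Bernoulli measures on blocks -/

/-- The shift on sequences of blocks. -/
def seqShift {J : Type*} (ω : ℕ → J) : ℕ → J := fun k => ω (k + 1)

lemma measurable_seqShift {J : Type*} [MeasurableSpace J] : Measurable (seqShift : (ℕ → J) → (ℕ → J)) :=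
  measurable_pi_lambda _ fun n => measurable_pi_apply (n + 1)

lemma measurableSet_head {J : Type*} [MeasurableSpace J] [DiscreteMeasurableSpace J] (j : J) : MeasurableSet {ω : ℕ → J | ω 0 = j} :=
  (measurable_pi_apply (X := fun _ : ℕ => J) 0) (measurableSet_singleton j)

/-- Conditionally on the first block, the later blocks of a Bernoulli sequence are again Bernoulli. -/
lemma bernoulli_restrict {J : Type*} [MeasurableSpace J] [DiscreteMeasurableSpace J] 
    (ρ : Measure J) [IsProbabilityMeasure ρ] (j : J) (hj : ρ {j} ≠ 0) :
    ((Measure.infinitePi fun _ : ℕ => ρ).restrict {ω | ω 0 = j}).map seqShift =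
      ρ {j} • Measure.infinitePi fun _ : ℕ => ρ := by
  set P := Measure.infinitePi fun _ : ℕ => ρ with hP
  have hjt : ρ {j} ≠ ⊤ := measure_ne_top _ _
  have key : (ρ {j})⁻¹ • (P.restrict {ω | ω 0 = j}).map seqShift = P := by
    refine Measure.eq_infinitePi _ fun s t ht => ?_
    have hbox : MeasurableSet (Set.pi (↑s) t : Set (ℕ → J)) :=
      MeasurableSet.pi s.countable_toSet fun i _ => MeasurableSet.of_discrete
    let t' : ℕ → Set J := fun k => Nat.casesOn k {j} t
    have hset : seqShift ⁻¹' (Set.pi (↑s) t) ∩ {ω : ℕ → J | ω 0 = j} =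
        Set.pi (↑(insert 0 (s.map ⟨Nat.succ, Nat.succ_injective⟩) : Finset ℕ)) t' := by
      ext ω
      simp [Set.mem_pi, seqShift, t', and_comm]
    rw [Measure.smul_apply, Measure.map_apply measurable_seqShift hbox,
      Measure.restrict_apply (measurable_seqShift hbox), hset, hP,
      Measure.infinitePi_pi _ (fun i _ => MeasurableSet.of_discrete),
      Finset.prod_insert (by simp), Finset.prod_map, smul_eq_mul]
    change (ρ {j})⁻¹ * (ρ {j} * ∏ i ∈ s, ρ (t i)) = _
    rw [← mul_assoc, ENNReal.inv_mul_cancel hj hjt, one_mul]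
  conv_rhs => rw [← key]
  rw [smul_smul, ENNReal.mul_inv_cancel hj hjt, one_smul]

lemma head_disjoint {J : Type*} :
    Pairwise (Function.onFun Disjoint (fun j : J => {ω : ℕ → J | ω 0 = j})) := by
  intro i j hij
  refine Set.disjoint_left.2 fun x hx hy => hij ?_
  exact (show x 0 = i from hx).symm.trans hy

lemma head_union {J : Type*} : ⋃ j : J, {ω : ℕ → J | ω 0 = j} = univ :=
  eq_univ_of_forall fun x => mem_iUnion.2 ⟨x 0, rfl⟩

lemma map_seqShift {J : Type*} [MeasurableSpace J] [DiscreteMeasurableSpace J] 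
    (ρ : Measure J) [IsProbabilityMeasure ρ] :
    (Measure.infinitePi fun _ : ℕ => ρ).map seqShift = Measure.infinitePi fun _ : ℕ => ρ := by
  refine Measure.eq_infinitePi _ fun s t ht => ?_
  have hbox : MeasurableSet (Set.pi (↑s) t : Set (ℕ → J)) :=
    MeasurableSet.pi s.countable_toSet fun i _ => MeasurableSet.of_discrete
  let t' : ℕ → Set J := fun k => Nat.casesOn k univ t
  have hset : seqShift ⁻¹' (Set.pi (↑s) t) =
      Set.pi (↑(s.map ⟨Nat.succ, Nat.succ_injective⟩ : Finset ℕ)) t' := by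
    ext ω
    simp [Set.mem_pi, seqShift, t']
  rw [Measure.map_apply measurable_seqShift hbox, hset,
    Measure.infinitePi_pi _ (fun i _ => MeasurableSet.of_discrete), Finset.prod_map]
  rfl

/-- The concatenation of the first `n` letters of the words `w (ω 0)`, `w (ω 1)`, …; used only for
`n > 0`. -/
def cat {J : Type*} {l : ℕ} (w : J → Sig l) (n : ℕ) (ω : ℕ → J) : Sig l := fun k => w (ω (k / n)) (k % n)

lemma measurable_cat {J : Type*} [Fintype J] [MeasurableSpace J]
    [DiscreteMeasurableSpace J] {l : ℕ} (w : J → Sig l) (n : ℕ) : Measurable (cat w n) :=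
  measurable_pi_lambda _ fun k =>
    (measurable_of_finite (fun j => w j (k % n))).comp (measurable_pi_apply (k / n))

lemma shift_cat {J : Type*} {l : ℕ} (w : J → Sig l) {n : ℕ} (hn : 0 < n) (ω : ℕ → J) :
    shift^[n] (cat w n ω) = cat w n (seqShift ω) := by
  ext k
  rw [shift_iterate_apply]
  simp [cat, seqShift, Nat.add_div_right k hn]

lemma cat_apply {J : Type*} {l : ℕ} (w : J → Sig l) {n : ℕ} (ω : ℕ → J) {k : ℕ} (hk : k < n) :
    cat w n ω k = w (ω 0) k := by
  simp [cat, Nat.div_eq_of_lt hk, Nat.mod_eq_of_lt hk]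

/-! ### Entropy and integrals of block Bernoulli measures -/

/-- Reading off one Bernoulli block: conditionally on the block `j` the vector `B^(k+n) π` is, up
to a translation by a constant, a copy of `B^k π`; the count hypothesis bounds by `log κ` the
entropy that is lost when the block is forgotten. -/
lemma Coding.smEnt_block {d l : ℕ} {A B : EE d →L[ℝ] EE d} {c : Fin l → EE d}
    {π : Sig l → EE d} {R : ℝ} (C : Coding A B c π R)
    {J : Type*} [Fintype J] [MeasurableSpace J] [DiscreteMeasurableSpace J]
    (ρ : Measure J) [IsProbabilityMeasure ρ] (hρ : ∀ j, ρ {j} ≠ 0)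
    (w : J → Sig l) {n : ℕ} (hn : 0 < n) (κ : ℕ) (k : ℕ) (T : EE d → Finset J)
    (hTκ : ∀ s, (T s).card ≤ κ)
    (hT : ∀ s ω, dist ((B ^ (k + n)) (π (cat w n ω))) s ≤ 1 → ω 0 ∈ T s) :
    smEnt (Measure.infinitePi fun _ : ℕ => ρ) (fun ω => (B ^ k) (π (cat w n ω))) +
        ballVol d * (∑ j, Real.negMulLog (ρ.real {j}) - Real.log κ) ≤
      smEnt (Measure.infinitePi fun _ : ℕ => ρ) (fun ω => (B ^ (k + n)) (π (cat w n ω))) := by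
  set P := Measure.infinitePi fun _ : ℕ => ρ with hP
  have hc := measurable_cat w n
  have key := sum_restrict_smEnt_le P (fun j => {ω | ω 0 = j}) measurableSet_head head_disjoint
    head_union (X := fun ω => (B ^ (k + n)) (π (cat w n ω))) ((C.measX (k + n)).comp hc)
    (fun ω => C.bddX (k + n) _) κ T
    (by rintro s j ⟨ω, h1, h2⟩
        have h1 : ω 0 = j := h1
        exact h1 ▸ hT s ω h2) hTκ
  rw [probReal_univ, mul_one] at key
  have hj : ∀ j, smEnt (P.restrict {ω | ω 0 = j}) (fun ω => (B ^ (k + n)) (π (cat w n ω))) =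
      ρ.real {j} * smEnt P (fun ω => (B ^ k) (π (cat w n ω))) +
        Real.negMulLog (ρ.real {j}) * ballVol d := by
    intro j
    have e1 : smEnt (P.restrict {ω | ω 0 = j}) (fun ω => (B ^ (k + n)) (π (cat w n ω))) =
        smEnt (P.restrict {ω | ω 0 = j}) (fun ω => (B ^ k) (π (cat w n (seqShift ω)))) := by
      rw [← smEnt_add_const _ (fun ω => (B ^ k) (π (cat w n (seqShift ω))))
        ((B ^ (k + n)) (π (w j)) - (B ^ k) (π (shift^[n] (w j))))]
      refine smEnt_congr ?_
      filter_upwards [ae_restrict_mem (measurableSet_head j)] with ω hω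
      have hω' : ω 0 = j := hω
      have h1 := C.sub_eq n (cat w n ω) (w j) fun i hi => by rw [cat_apply w ω hi, hω']
      rw [shift_cat w hn] at h1
      have h2 : π (cat w n ω) = π (w j) + (A ^ n) (π (cat w n (seqShift ω)) -
        π (shift^[n] (w j))) := by rw [← h1]; abel
      rw [h2, map_add, pow_add, mul_apply_eq_comp, mul_apply_eq_comp, C.powBA, map_sub]
      abel
    rw [e1, ← smEnt_map _ measurable_seqShift (X := fun ω => (B ^ k) (π (cat w n ω)))
      ((C.measX k).comp hc), bernoulli_restrict ρ j (hρ j),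
      smEnt_smul _ (X := fun ω => (B ^ k) (π (cat w n ω))) ((C.measX k).comp hc)
        (fun ω => C.bddX k _)]
    rfl
  simp only [hj] at key
  rw [Finset.sum_add_distrib, ← Finset.sum_mul, ← Finset.sum_mul, sum_measureReal_singleton,
    Finset.coe_univ, probReal_univ, one_mul] at key
  linarith

/-- Each further block adds at least `H(ρ) - log κ` to the smoothed entropy, from any scale `i`. -/
lemma Coding.smEnt_blocks {d l : ℕ} {A B : EE d →L[ℝ] EE d} {c : Fin l → EE d}
    {π : Sig l → EE d} {R : ℝ} (C : Coding A B c π R)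
    {J : Type*} [Fintype J] [MeasurableSpace J] [DiscreteMeasurableSpace J]
    (ρ : Measure J) [IsProbabilityMeasure ρ] (hρ : ∀ j, ρ {j} ≠ 0)
    (w : J → Sig l) {n : ℕ} (hn : 0 < n) (κ : ℕ) (T : ℕ → EE d → Finset J)
    (hTκ : ∀ k s, (T k s).card ≤ κ)
    (hT : ∀ k s ω, dist ((B ^ (k + n)) (π (cat w n ω))) s ≤ 1 → ω 0 ∈ T k s) (i k : ℕ) :
    k * (ballVol d * (∑ j, Real.negMulLog (ρ.real {j}) - Real.log κ)) ≤
      smEnt (Measure.infinitePi fun _ : ℕ => ρ) (fun ω => (B ^ (k * n + i)) (π (cat w n ω))) := by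
  induction k with
  | zero =>
    rw [Nat.cast_zero, zero_mul]
    exact smEnt_nonneg _ _
  | succ k ih =>
    have := C.smEnt_block ρ hρ w hn κ (k * n + i) (T (k * n + i)) (hTκ _) (hT _)
    rw [Nat.succ_mul, add_right_comm, Nat.cast_succ, add_mul, one_mul]
    exact (add_le_add_left ih _).trans this

lemma map_shift_block {l : ℕ} {J : Type*} [Fintype J] [MeasurableSpace J]
    [DiscreteMeasurableSpace J] (ρ : Measure J) [IsProbabilityMeasure ρ] (w : J → Sig l) {n : ℕ}
    (hn : 0 < n) :
    ((Measure.infinitePi fun _ : ℕ => ρ).map (cat w n)).map shift^[n] =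
      (Measure.infinitePi fun _ : ℕ => ρ).map (cat w n) := by
  rw [Measure.map_map (measurable_shift.iterate n) (measurable_cat w n)]
  have : shift^[n] ∘ cat w n = cat w n ∘ seqShift := by
    ext1 ω; exact shift_cat w hn ω
  rw [this, ← Measure.map_map (measurable_cat w n) measurable_seqShift, map_seqShift]

/-- The shift average of the distribution of an independent concatenation of the words
`w j` (each used with probability `ρ {j}`) is shift invariant; its projection entropy is at least
`(H(ρ) - log κ) / n`, and its integrals are averages of Birkhoff sums over blocks. -/
theorem Coding.bernoulli_bound {d l : ℕ} {A B : EE d →L[ℝ] EE d} {c : Fin l → EE d}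
    {π : Sig l → EE d} {R : ℝ} (C : Coding A B c π R)
    {J : Type*} [Fintype J] [MeasurableSpace J] [DiscreteMeasurableSpace J]
    (ρ : Measure J) [IsProbabilityMeasure ρ] (hρ : ∀ j, ρ {j} ≠ 0)
    (w : J → Sig l) {n : ℕ} (hn : 0 < n) (κ : ℕ) (T : ℕ → EE d → Finset J)
    (hTκ : ∀ k s, (T k s).card ≤ κ)
    (hT : ∀ k s ω, dist ((B ^ (k + n)) (π (cat w n ω))) s ≤ 1 → ω 0 ∈ T k s) :
    ∃ m : Measure (Sig l), IsProbabilityMeasure m ∧ m.map shift = m ∧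
      ∑ j, Real.negMulLog (ρ.real {j}) - Real.log κ ≤ n * projEntropy π m ∧
      ∀ (g : Sig l → ℝ) (M : ℝ) (b : J → ℝ), Measurable g → (∀ x, |g x| ≤ M) →
        (∀ ω, b (ω 0) ≤ birk g n (cat w n ω)) →
        ∑ j, ρ.real {j} * b j ≤ n * ∫ x, g x ∂m := by
  set P := Measure.infinitePi fun _ : ℕ => ρ with hP
  have hc := measurable_cat w n
  set q := P.map (cat w n) with hq
  have hqp : IsProbabilityMeasure q := Measure.isProbabilityMeasure_map hc.aemeasurable
  have hqi : ∀ i : ℕ, IsProbabilityMeasure (q.map shift^[i]) := fun i =>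
    Measure.isProbabilityMeasure_map (measurable_shift.iterate i).aemeasurable
  have hn0 : (n : ENNReal) ≠ 0 := by exact_mod_cast hn.ne'
  have hnr : (0 : ℝ) < n := by exact_mod_cast hn
  set m : Measure (Sig l) := (n : ENNReal)⁻¹ • ∑ i ∈ Finset.range n, q.map shift^[i] with hm
  have hmp : IsProbabilityMeasure m := by
    constructor
    rw [hm, Measure.smul_apply, Measure.finsetSum_apply]
    simp only [measure_univ, Finset.sum_const, Finset.card_range, nsmul_eq_mul, mul_one,
      smul_eq_mul]
    exact ENNReal.inv_mul_cancel hn0 (ENNReal.natCast_ne_top n)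
  have hinv : m.map shift = m := by
    rw [hm, Measure.map_smul, Measure.map_finset_sum measurable_shift.aemeasurable]
    congr 1
    have e : ∀ i, (q.map shift^[i]).map shift = q.map shift^[i + 1] := fun i => by
      rw [Measure.map_map measurable_shift (measurable_shift.iterate i), Function.iterate_succ']
    simp only [e]
    obtain ⟨N, rfl⟩ : ∃ N, n = N + 1 := ⟨n - 1, by omega⟩
    rw [Finset.sum_range_succ, Finset.sum_range_succ', hq, map_shift_block ρ w hn,
      Function.iterate_zero, Measure.map_id]
  refine ⟨m, hmp, hinv, ?_, ?_⟩
  · set h := ∑ j, Real.negMulLog (ρ.real {j}) - Real.log κ with hh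
    have hv := ballVol_pos d
    have hlow : ∀ k : ℕ, k * (ballVol d * h) - n * (ballVol d * Real.log l) ≤
        smEnt m (fun x => (B ^ (k * n)) (π x)) := by
      intro k
      refine le_trans ?_ (smEnt_concave (fun i => q.map shift^[i]) (C.measX (k * n))
        (C.bddX (k * n)) n hn)
      have h1 : ∀ i ∈ Finset.range n, k * (ballVol d * h) - n * (ballVol d * Real.log l) ≤
          smEnt (q.map shift^[i]) (fun x => (B ^ (k * n)) (π x)) := by
        intro i hi
        -- starting from scale `i` compensates for the `i` letters removed by the shift
        have a1 := C.smEnt_blocks ρ hρ w hn κ T hTκ hT i k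
        rw [← smEnt_map _ hc (C.measX _)] at a1
        have a2 := C.smEnt_add_le q (k * n) i
        have a3 : (i : ℝ) * (ballVol d * Real.log l) ≤ n * (ballVol d * Real.log l) :=
          mul_le_mul_of_nonneg_right (by exact_mod_cast (Finset.mem_range.1 hi).le)
            (mul_nonneg hv.le (Real.log_natCast_nonneg l))
        exact sub_le_iff_le_add.2 (a1.trans (a2.trans (add_le_add_right a3 _)))
      have h2 := Finset.card_nsmul_le_sum _ _ _ h1
      rw [Finset.card_range, nsmul_eq_mul] at h2
      rw [inv_mul_eq_div, le_div_iff₀ hnr]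
      linarith
    have ht := (C.tendsto_smEnt_div m hinv).comp
      (tendsto_id.atTop_mul_const' hn : Tendsto (fun k : ℕ => k * n) atTop atTop)
    have hl2 : Tendsto (fun k : ℕ => ballVol d * h / n - ballVol d * Real.log l / (k : ℝ)) atTop
        (nhds (ballVol d * h / n - 0)) :=
      tendsto_const_nhds.sub (tendsto_const_div_atTop_nhds_zero_nat _)
    rw [sub_zero] at hl2
    have := le_of_tendsto_of_tendsto hl2 ht (by
      filter_upwards [eventually_gt_atTop 0] with k hk
      have hkr : (0 : ℝ) < k := by exact_mod_cast hk
      simp only [Function.comp]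
      rw [le_div_iff₀ (by push_cast; positivity)]
      refine le_trans (le_of_eq ?_) (hlow k)
      push_cast
      field_simp)
    rw [div_le_iff₀ hnr, mul_assoc] at this
    have := le_of_mul_le_mul_left this hv
    linarith
  · intro g M b hg hM hb
    have hgi : ∀ i, Integrable g (q.map shift^[i]) := fun i =>
      Integrable.of_bound hg.aestronglyMeasurable M (Eventually.of_forall hM)
    have e1 : n * ∫ x, g x ∂m = ∫ ω, birk g n (cat w n ω) ∂P := by
      have hgi' : ∀ i ∈ Finset.range n, Integrable (fun ω => g (shift^[i] (cat w n ω))) P :=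
        fun i _ => Integrable.of_bound
          (hg.comp ((measurable_shift.iterate i).comp hc)).aestronglyMeasurable M
          (Eventually.of_forall fun ω => hM _)
      unfold birk
      rw [integral_finsetSum _ hgi', hm, integral_smul_measure,
        integral_finsetSum_measure fun i _ => hgi i]
      rw [ENNReal.toReal_inv, ENNReal.toReal_natCast, smul_eq_mul, ← mul_assoc,
        mul_inv_cancel₀ hnr.ne', one_mul]
      refine Finset.sum_congr rfl fun i _ => ?_
      rw [integral_map (measurable_shift.iterate i).aemeasurable hg.aestronglyMeasurable, hq,
        integral_map (f := fun x => g (shift^[i] x)) hc.aemeasurable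
          (hg.comp (measurable_shift.iterate i)).aestronglyMeasurable]
    have e2 : ∫ ω, b (ω 0) ∂P = ∑ j, ρ.real {j} * b j := by
      have hmp := measurePreserving_eval_infinitePi (fun _ : ℕ => ρ) 0
      have := integral_map hmp.measurable.aemeasurable (f := b)
        (Measurable.of_discrete).aestronglyMeasurable (μ := P)
      rw [hmp.map_eq] at this
      rw [← this, integral_fintype (Integrable.of_finite)]
      rfl
    rw [e1, ← e2]
    refine integral_mono ?_ ?_ hb
    · exact Integrable.of_bound ((Measurable.of_discrete (f := b)).comp
        (measurable_pi_apply 0)).aestronglyMeasurable (∑ j, |b j|) (Eventually.of_forall fun ω =>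
          Finset.single_le_sum (f := fun j => |b j|) (fun j _ => abs_nonneg _)
            (Finset.mem_univ (ω 0)))
    · unfold birk
      exact integrable_finsetSum _ fun i _ => Integrable.of_bound
          (hg.comp ((measurable_shift.iterate i).comp hc)).aestronglyMeasurable M
          (Eventually.of_forall fun ω => hM _)

/-! ### The coding attached to an attractor -/

lemma exists_coding {d l : ℕ} (A : EE d →L[ℝ] EE d) (hAbij : Function.Bijective A)
    (hAnorm : ‖A‖ < 1) (c : Fin l → EE d) (K : Set (EE d)) (hKcomp : IsCompact K)
    (hKattr : K = ⋃ i, (fun x => A x + c i) '' K) (π : Sig l → EE d)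
    (hπ : ∀ x, (⋂ n, itIm (fun i x => A x + c i) K x n) = {π x}) :
    (∀ x, π x ∈ K) ∧ ∃ (B : EE d →L[ℝ] EE d) (R : ℝ), Coding A B c π R := by
  have hmem : ∀ x n, π x ∈ itIm (fun i x => A x + c i) K x n := fun x n =>
    mem_iInter.1 ((hπ x).symm ▸ mem_singleton (π x)) n
  have hK : ∀ x, π x ∈ K := fun x => hmem x 0
  obtain ⟨R, hR⟩ := hKcomp.isBounded.exists_norm_le
  let e := (LinearEquiv.ofBijective (A : EE d →ₗ[ℝ] EE d) hAbij).toContinuousLinearEquiv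
  refine ⟨hK, (e.symm : EE d →L[ℝ] EE d), R, ?_, ?_, hAnorm, fun x => ?_, fun x => hR _ (hK x)⟩
  · ext1 y; exact e.apply_symm_apply y
  · ext1 y; exact e.symm_apply_apply y
  · have : A (π (shift x)) + c (x 0) ∈ ⋂ n, itIm (fun i x => A x + c i) K x n := by
      refine mem_iInter.2 fun n => ?_
      cases n with
      | zero =>
        change _ ∈ K
        rw [hKattr]
        exact mem_iUnion.2 ⟨x 0, π (shift x), hK _, rfl⟩
      | succ n => exact ⟨π (shift x), hmem (shift x) n, rfl⟩
    rw [hπ x] at this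
    exact (mem_singleton_iff.1 this).symm

lemma birk_succ {l : ℕ} (g : Sig l → ℝ) (n : ℕ) (x : Sig l) :
    birk g (n + 1) x = birk g n (shift x) + g x := by
  unfold birk
  rw [Finset.sum_range_succ']
  rfl

lemma birk_abs_le {l : ℕ} (g : Sig l → ℝ) {M : ℝ} (hM : ∀ x, |g x| ≤ M) (n : ℕ) (x : Sig l) :
    |birk g n x| ≤ n * M := by
  refine (Finset.abs_sum_le_sum_abs _ _).trans ?_
  refine (Finset.sum_le_card_nsmul _ _ M fun i _ => hM _).trans ?_
  simp

/-- Birkhoff sums of length `n` over two points of the same `n`-cylinder differ by at most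
`n ε + O(1)`. -/
lemma Coding.birk_variation {d l : ℕ} {A B : EE d →L[ℝ] EE d} {c : Fin l → EE d}
    {π : Sig l → EE d} {R : ℝ} (C : Coding A B c π R) {f : EE d → ℝ} (hf : Continuous f)
    {M : ℝ} (hM : ∀ x, |f (π x)| ≤ M) {ε : ℝ} (hε : 0 < ε) :
    ∃ D : ℝ, ∀ (n : ℕ) (x y : Sig l), (∀ i < n, x i = y i) →
      birk (fun z => f (π z)) n x ≤ birk (fun z => f (π z)) n y + (n * ε + D) := by
  have huc := (isCompact_closedBall (0 : EE d) R).uniformContinuousOn_of_continuous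
    hf.continuousOn
  obtain ⟨δ, hδ, hδf⟩ := Metric.uniformContinuousOn_iff.1 huc ε hε
  have ht : Tendsto (fun n : ℕ => ‖A‖ ^ n * (2 * R)) atTop (nhds 0) := by
    simpa using C.tendsto_pow.mul_const (2 * R)
  obtain ⟨N, hN⟩ := eventually_atTop.1 (ht.eventually_lt_const hδ)
  have main : ∀ (n : ℕ) (x y : Sig l), (∀ i < n, x i = y i) →
      birk (fun z => f (π z)) n x ≤ birk (fun z => f (π z)) n y +
        (n * ε + (min n N : ℕ) * (2 * M)) := by
    intro n
    induction n with
    | zero => intro x y _; simp [birk]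
    | succ n ih =>
      intro x y h
      have h1 := ih (shift x) (shift y) fun i hi => h (i + 1) (by omega)
      rw [birk_succ, birk_succ]
      have hx := abs_le.1 (hM x)
      have hy := abs_le.1 (hM y)
      rcases le_or_gt N n with hNn | hNn
      · have h2 := hδf (π x) (mem_closedBall_zero_iff.2 (C.bdd x)) (π y)
          (mem_closedBall_zero_iff.2 (C.bdd y))
          ((C.dist_le (n + 1) x y h).trans_lt (hN (n + 1) (by omega)))
        have h3 := (abs_lt.1 (by rwa [Real.dist_eq] at h2)).2
        rw [min_eq_right hNn] at h1
        rw [min_eq_right (by omega)]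
        push_cast
        linarith
      · rw [min_eq_left hNn.le] at h1
        rw [min_eq_left (by omega)]
        push_cast
        linarith
  rcases isEmpty_or_nonempty (Sig l) with he | ⟨⟨x0⟩⟩
  · exact ⟨0, fun n x => he.elim x⟩
  have hM0 : 0 ≤ M := (abs_nonneg _).trans (hM x0)
  refine ⟨N * (2 * M), fun n x y h => (main n x y h).trans ?_⟩
  have : ((min n N : ℕ) : ℝ) ≤ N := by exact_mod_cast min_le_right n N
  have := mul_le_mul_of_nonneg_right this (by linarith : 0 ≤ 2 * M)
  linarith

/-- A point of `ℝ^d` is at sup-distance at most `r` from at most `(⌊2r⌋ + 1)^d` integer points. -/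
lemma card_lattice_le {d : ℕ} {J : Type*} [Fintype J] (a : J → Fin d → ℤ)
    (ha : Function.Injective a) (r : ℝ) (z : Fin d → ℝ) (T : Finset J)
    (hT : ∀ j ∈ T, ∀ i, |(a j i : ℝ) - z i| ≤ r) : T.card ≤ (⌊2 * r⌋₊ + 1) ^ d := by
  have h1 : T.card ≤ (Finset.Icc (fun i => ⌈z i - r⌉) (fun i => ⌊z i + r⌋)).card := by
    refine Finset.card_le_card_of_injOn a (fun j hj => ?_) ha.injOn
    refine Finset.mem_coe.2 (Finset.mem_Icc.2 ⟨fun i => ?_, fun i => ?_⟩)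
    · exact Int.ceil_le.2 (by linarith [(abs_le.1 (hT j hj i)).1])
    · exact Int.le_floor.2 (by linarith [(abs_le.1 (hT j hj i)).2])
  refine h1.trans ?_
  rw [Pi.card_Icc]
  refine (Finset.prod_le_pow_card _ _ (⌊2 * r⌋₊ + 1) fun i _ => ?_).trans (by simp)
  rw [Int.card_Icc]
  have h2 : (⌊z i + r⌋ - ⌈z i - r⌉ : ℤ) ≤ ⌊2 * r⌋ := by
    refine Int.le_floor.2 ?_
    push_cast
    linarith [Int.floor_le (z i + r), Int.le_ceil (z i - r)]
  have h3 : ⌊2 * r⌋ ≤ (⌊2 * r⌋₊ : ℤ) := by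
    rw [← Int.floor_toNat]
    exact Int.self_le_toNat _
  omega

lemma exists_measure_weights {J : Type*} [Fintype J] [MeasurableSpace J]
    [MeasurableSingletonClass J] (p : J → ℝ) (hp : ∀ j, 0 ≤ p j) (hs : ∑ j, p j = 1) :
    ∃ ρ : Measure J, IsProbabilityMeasure ρ ∧ ∀ j, ρ {j} = ENNReal.ofReal (p j) := by
  let P : PMF J := PMF.ofFintype (fun j => ENNReal.ofReal (p j)) (by
    rw [← ENNReal.ofReal_sum_of_nonneg fun j _ => hp j, hs, ENNReal.ofReal_one])
  exact ⟨P.toMeasure, inferInstance, fun j => by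
    rw [P.toMeasure_apply_singleton j (measurableSet_singleton j)]; rfl⟩

/-! ### The partition function -/

/-- The words coding points of the cell `A^n (cube α)`. -/
def cell {d l : ℕ} (A : EE d →L[ℝ] EE d) (K : Set (EE d)) (π : Sig l → EE d) (n : ℕ)
    (α : Fin d → ℤ) : Set (Sig l) := π ⁻¹' ((⇑(A ^ n) '' cube d α) ∩ K)

lemma mem_cell {d l : ℕ} {A B : EE d →L[ℝ] EE d} {c : Fin l → EE d} {K : Set (EE d)}
    {π : Sig l → EE d} {R : ℝ} (C : Coding A B c π R) {n : ℕ} {α : Fin d → ℤ} {x : Sig l}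
    (h : x ∈ cell A K π n α) : (B ^ n) (π x) ∈ cube d α := by
  obtain ⟨⟨q, hq, hqx⟩, -⟩ := h
  rw [← hqx, C.powBA]
  exact hq

lemma exists_cell {d l : ℕ} {A B : EE d →L[ℝ] EE d} {c : Fin l → EE d} {K : Set (EE d)}
    {π : Sig l → EE d} {R : ℝ} (C : Coding A B c π R) (hK : ∀ x, π x ∈ K) (n : ℕ) (x : Sig l) :
    ∃ α, x ∈ cell A K π n α := by
  refine ⟨fun i => ⌊(B ^ n) (π x) i⌋, ⟨(B ^ n) (π x), fun i => ⟨?_, ?_⟩, C.powAB n _⟩, hK x⟩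
  · exact Int.floor_le _
  · exact Int.lt_floor_add_one _

lemma abs_coord_le {d : ℕ} (y : EE d) (i : Fin d) : |y i| ≤ ‖y‖ := by
  simpa using PiLp.norm_apply_le y i

lemma finite_cells {d l : ℕ} {A B : EE d →L[ℝ] EE d} {c : Fin l → EE d} {K : Set (EE d)}
    {π : Sig l → EE d} {R : ℝ} (C : Coding A B c π R) (n : ℕ) :
    {α | (cell A K π n α).Nonempty}.Finite := by
  refine (Set.finite_Icc (fun _ => ⌊-(‖B ^ n‖ * R) - 1⌋ : Fin d → ℤ)
    (fun _ => ⌈‖B ^ n‖ * R⌉)).subset ?_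
  rintro α ⟨x, hx⟩
  have h1 := mem_cell C hx
  have h2 : ∀ i, |(B ^ n) (π x) i| ≤ ‖B ^ n‖ * R := fun i =>
    (abs_coord_le _ i).trans (C.bddX n x)
  refine ⟨fun i => ?_, fun i => ?_⟩
  · have : (⌊-(‖B ^ n‖ * R) - 1⌋ : ℝ) ≤ α i := by
      linarith [Int.floor_le (-(‖B ^ n‖ * R) - 1), (abs_le.1 (h2 i)).1, (h1 i).2]
    exact_mod_cast this
  · have : (α i : ℝ) ≤ ⌈‖B ^ n‖ * R⌉ := by
      linarith [Int.le_ceil (‖B ^ n‖ * R), (abs_le.1 (h2 i)).2, (h1 i).1]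
    exact_mod_cast this

/-- The index set of the cells at scale `n` that meet `π(Σ)`. -/
abbrev Cells {d l : ℕ} (A : EE d →L[ℝ] EE d) (K : Set (EE d)) (π : Sig l → EE d) (n : ℕ) :=
  {α // (cell A K π n α).Nonempty}

/-- A real supremum of exponentials over a nonempty set is attained up to a factor `e`. -/
lemma exists_near_sup {X : Type*} (S : Set X) (hS : S.Nonempty) (b : X → ℝ) :
    ∃ x ∈ S, ⨆ y ∈ S, Real.exp (b y) ≤ Real.exp (1 + b x) := by
  by_contra! h
  set a := ⨆ y ∈ S, Real.exp (b y) with ha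
  obtain ⟨x, hx⟩ := hS
  have ha0 : 0 < a := (Real.exp_pos _).trans (h x hx)
  have : Nonempty X := ⟨x⟩
  have h1 : a ≤ Real.exp (-1) * a := by
    refine ciSup_le fun y => ?_
    by_cases hy : y ∈ S
    · rw [ciSup_pos hy]
      have := mul_le_mul_of_nonneg_left (h y hy).le (Real.exp_pos (-1)).le
      rwa [← Real.exp_add, neg_add_cancel_left] at this
    · have : IsEmpty (y ∈ S) := ⟨hy⟩
      rw [Real.iSup_of_isEmpty]
      positivity
  have h2 : Real.exp (-1) < 1 := by rw [Real.exp_lt_one_iff]; norm_num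
  nlinarith

lemma le_biSup_exp {X : Type*} (S : Set X) (b : X → ℝ) {M : ℝ} (hM : ∀ x, b x ≤ M) {x : X}
    (hx : x ∈ S) : Real.exp (b x) ≤ ⨆ y ∈ S, Real.exp (b y) := by
  have hbdd : BddAbove (range fun y => ⨆ _ : y ∈ S, Real.exp (b y)) := by
    refine ⟨Real.exp M, ?_⟩
    rintro _ ⟨y, rfl⟩
    refine Real.iSup_le (fun _ => Real.exp_le_exp.2 (hM y)) (Real.exp_pos _).le
  have := le_ciSup hbdd x
  rwa [ciSup_pos hx] at this

/-- Cells not meeting `π(Σ)` contribute a supremum over an empty set, which is `0`. -/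
lemma Zsum_eq {d l : ℕ} (A : EE d →L[ℝ] EE d) (K : Set (EE d)) (π : Sig l → EE d)
    (f : EE d → ℝ) (n : ℕ) [Fintype (Cells A K π n)] :
    Zsum A K π f n = ∑ j : Cells A K π n,
      ⨆ β ∈ cell A K π n j.1, Real.exp (birk (fun y => f (π y)) n β) := by
  classical
  unfold Zsum
  rw [tsum_eq_sum (s := Finset.univ.map (Function.Embedding.subtype
    fun α => (cell A K π n α).Nonempty)), Finset.sum_map]
  · rfl
  · intro α hα
    have he : ∀ β, IsEmpty (β ∈ π ⁻¹' ((⇑(A ^ n) '' cube d α) ∩ K)) := fun β => ⟨fun hβ => hα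
      (Finset.mem_map.2 ⟨⟨α, ⟨β, hβ⟩⟩, Finset.mem_univ _, rfl⟩)⟩
    have : ∀ β, (⨆ _ : β ∈ π ⁻¹' ((⇑(A ^ n) '' cube d α) ∩ K),
        Real.exp (birk (fun y => f (π y)) n β)) = 0 := fun β => by
      have := he β
      exact Real.iSup_of_isEmpty _
    simp only [this]
    exact Real.iSup_const_zero

lemma exp_le_Zsum {d l : ℕ} {A B : EE d →L[ℝ] EE d} {c : Fin l → EE d} {K : Set (EE d)}
    {π : Sig l → EE d} {R : ℝ} (C : Coding A B c π R) (hK : ∀ x, π x ∈ K) {f : EE d → ℝ} {M : ℝ}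
    (hM : ∀ x, |f (π x)| ≤ M) (x : Sig l) (n : ℕ) :
    Real.exp (-(n * M)) ≤ Zsum A K π f n := by
  have hfin : Fintype (Cells A K π n) := (finite_cells (K := K) C n).fintype
  rw [Zsum_eq]
  obtain ⟨α, hα⟩ := exists_cell C hK n x
  set g : Sig l → ℝ := fun y => f (π y)
  have hb : ∀ y, -(n * M) ≤ birk g n y ∧ birk g n y ≤ n * M := fun y =>
    abs_le.1 (birk_abs_le g hM n y)
  have h1 : Real.exp (birk g n x) ≤ ⨆ β ∈ cell A K π n α, Real.exp (birk g n β) :=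
    le_biSup_exp _ (birk g n) (fun y => (hb y).2) hα
  have h2 := Finset.single_le_sum (s := Finset.univ) (f := fun j : Cells A K π n =>
    ⨆ β ∈ cell A K π n j.1, Real.exp (birk g n β))
    (fun j _ => Real.iSup_nonneg fun β => Real.iSup_nonneg fun _ => (Real.exp_pos _).le)
    (Finset.mem_univ ⟨α, ⟨x, hα⟩⟩)
  exact ((Real.exp_le_exp.2 (hb x).1).trans h1).trans h2

/-- Gibbs weights on the cells at scale `n` turn the Bernoulli construction into the upper bound
for the partition function, with an error subexponential in `n`. -/
theorem Coding.log_Zsum_le {d l : ℕ} {A B : EE d →L[ℝ] EE d} {c : Fin l → EE d} {K : Set (EE d)}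
    {π : Sig l → EE d} {R : ℝ} (C : Coding A B c π R) (hK : ∀ x, π x ∈ K) {f : EE d → ℝ}
    (hf : Continuous f) {M : ℝ} (hM : ∀ x, |f (π x)| ≤ M) (x0 : Sig l) {S : ℝ}
    (hS : ∀ m : Measure (Sig l), IsProbabilityMeasure m → m.map shift = m →
      projEntropy π m + ∫ x, f (π x) ∂m ≤ S) {ε : ℝ} (hε : 0 < ε) :
    ∃ D : ℝ, ∀ n : ℕ, 0 < n → Real.log (Zsum A K π f n) ≤ n * (S + ε) + D := by
  obtain ⟨D, hD⟩ := C.birk_variation hf hM hε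
  set r := 2 * R + 2 with hr
  refine ⟨D + Real.log ((⌊2 * r⌋₊ + 1) ^ d : ℕ) + 1, fun n hn => ?_⟩
  classical
  have hfin : Fintype (Cells A K π n) := (finite_cells (K := K) C n).fintype
  have hZpos := (Real.exp_pos _).trans_le (exp_le_Zsum C hK hM x0 n)
  rw [Zsum_eq] at hZpos ⊢
  let J := Cells A K π n
  let _ : MeasurableSpace J := ⊤
  have : DiscreteMeasurableSpace J := ⟨fun _ => trivial⟩
  have hJne : Nonempty J := by
    obtain ⟨α, hα⟩ := exists_cell C hK n x0
    exact ⟨⟨α, ⟨x0, hα⟩⟩⟩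
  set g : Sig l → ℝ := fun y => f (π y) with hg
  choose w hw hwsup using fun j : J => exists_near_sup (cell A K π n j.1) j.2 (birk g n)
  set Z := ∑ j, Real.exp (birk g n (w j)) with hZ
  have hZ0 : 0 < Z := Finset.sum_pos (fun j _ => Real.exp_pos _) Finset.univ_nonempty
  have hlogZ : Real.log (∑ j : J, ⨆ β ∈ cell A K π n j.1, Real.exp (birk g n β)) ≤
      1 + Real.log Z := by
    rw [← Real.log_exp 1, ← Real.log_mul (Real.exp_pos _).ne' hZ0.ne']
    refine Real.log_le_log hZpos ?_
    rw [hZ, Finset.mul_sum]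
    refine Finset.sum_le_sum fun j _ => ?_
    rw [← Real.exp_add]
    exact hwsup j
  set p : J → ℝ := fun j => Real.exp (birk g n (w j)) / Z with hp
  have hp0 : ∀ j, 0 < p j := fun j => div_pos (Real.exp_pos _) hZ0
  have hps : ∑ j, p j = 1 := by rw [← Finset.sum_div, div_self hZ0.ne']
  obtain ⟨ρ, hρp, hρ⟩ := exists_measure_weights p (fun j => (hp0 j).le) hps
  have hρr : ∀ j, ρ.real {j} = p j := fun j => by
    rw [Measure.real, hρ, ENNReal.toReal_ofReal (hp0 j).le]
  -- words sharing a unit window at scale `k + n` have their cells, after applying `B^n`, within a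
  -- distance of the point `A^k s` that depends neither on `k` nor on `n`
  have hcount : ∀ (k : ℕ) (s : EE d) (ω : ℕ → J),
      dist ((B ^ (k + n)) (π (cat w n ω))) s ≤ 1 →
      ∀ i, |((ω 0).1 i : ℝ) - (A ^ k) s i| ≤ r := by
    intro k s ω hω i
    set y := π (cat w n ω) with hy
    set q := (B ^ n) (π (w (ω 0))) with hq
    have hqc := mem_cell C (hw (ω 0)) i
    have h1 : ‖(B ^ n) y - (A ^ k) s‖ ≤ 1 := by
      have e : (B ^ n) y - (A ^ k) s = (A ^ k) ((B ^ (k + n)) y - s) := by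
        rw [map_sub, pow_add, mul_apply_eq_comp, C.powAB]
      rw [e]
      refine (clm_pow_norm_le A k _).trans (mul_le_one₀ ?_ (norm_nonneg _) ?_)
      · exact pow_le_one₀ (norm_nonneg _) C.norm_lt.le
      · rwa [← dist_eq_norm]
    have h2 : ‖(B ^ n) y - q‖ ≤ 2 * R := by
      have e := C.sub_eq n (cat w n ω) (w (ω 0)) fun i hi => cat_apply w ω hi
      rw [hq, ← map_sub, hy, e, C.powBA]
      have b1 := C.bdd (shift^[n] (cat w n ω))
      have b2 := C.bdd (shift^[n] (w (ω 0)))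
      exact (norm_sub_le _ _).trans (by linarith)
    have h3 := abs_le.1 ((abs_coord_le _ i).trans h1)
    have h4 := abs_le.1 ((abs_coord_le _ i).trans h2)
    rw [PiLp.sub_apply] at h3 h4
    rw [hr]
    refine abs_le.2 ⟨?_, ?_⟩ <;> linarith [h3.1, h3.2, h4.1, h4.2, hqc.1, hqc.2]
  obtain ⟨m, hmp, hmi, hent, hint⟩ := C.bernoulli_bound ρ
    (fun j => by rw [hρ]; exact (ENNReal.ofReal_pos.2 (hp0 j)).ne') w hn ((⌊2 * r⌋₊ + 1) ^ d)
    (fun k s => Finset.univ.filter fun j : J => ∀ i, |(j.1 i : ℝ) - (A ^ k) s i| ≤ r)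
    (fun k s => card_lattice_le (fun j : J => j.1) Subtype.val_injective r ((A ^ k) s) _
      fun j hj => (Finset.mem_filter.1 hj).2)
    (fun k s ω hω => Finset.mem_filter.2 ⟨Finset.mem_univ _, hcount k s ω hω⟩)
  have hint' := hint g M (fun j => birk g n (w j) - (n * ε + D))
    (hf.comp C.continuous).measurable hM fun ω => by
      have := hD n (w (ω 0)) (cat w n ω) fun i hi => (cat_apply w ω hi).symm
      exact sub_le_iff_le_add.2 this
  simp only [hρr] at hent hint'
  -- the Gibbs identity: entropy plus mean energy is the logarithm of the normalizing sum
  have hgibbs : ∑ j, Real.negMulLog (p j) + ∑ j, p j * birk g n (w j) = Real.log Z := by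
    rw [← Finset.sum_add_distrib, ← one_mul (Real.log Z), ← hps, Finset.sum_mul]
    refine Finset.sum_congr rfl fun j _ => ?_
    have : Real.log (p j) = birk g n (w j) - Real.log Z := by
      rw [hp, Real.log_div (Real.exp_pos _).ne' hZ0.ne', Real.log_exp]
    rw [Real.negMulLog, this]
    ring
  have hsum : ∑ j, p j * (birk g n (w j) - (n * ε + D)) =
      ∑ j, p j * birk g n (w j) - (n * ε + D) := by
    simp only [mul_sub]
    rw [Finset.sum_sub_distrib, ← Finset.sum_mul, hps, one_mul]
  have hSm := mul_le_mul_of_nonneg_left (hS m hmp hmi) (Nat.cast_nonneg (α := ℝ) n)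
  rw [mul_add] at hSm
  rw [mul_add]
  linarith

/-- A crude bound, which makes the set of values in the variational principle bounded above. -/
lemma projEntropy_le {d l : ℕ} {A B : EE d →L[ℝ] EE d} {c : Fin l → EE d}
    {π : Sig l → EE d} {R : ℝ} (C : Coding A B c π R) (m : Measure (Sig l))
    [IsProbabilityMeasure m] : projEntropy π m ≤ l := by
  unfold projEntropy
  have h1 := condEntropyPart_le m cylP measurableSet_cylP
    (C.continuous.comp continuous_shift).measurable.comap_le
  have h2 := condEntropyPart_nonneg m cylP measurableSet_cylP C.continuous.measurable.comap_le
  rw [Fintype.card_fin] at h1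
  exact (sub_le_self _ h2).trans h1

/-- **Step 2 of Theorem 2.1**: for the affine IFS `S_i x = A x + c_i` with `‖A‖ < 1`,
attractor `K` and canonical projection `π`, and every continuous `f`,
`limsup_n (1/n) log ∑_{Q ∈ 𝒬_n, Q∩K≠∅} sup_{α ∈ π⁻¹(Q∩K)} e^{(S_n f∘π)(α)}
  ≤ sup { h_π(σ,m) + ∫ f∘π dm : m ∈ M_σ(Σ) }`. -/
theorem projection_pressure_limsup_le {d l : ℕ} (hl : 0 < l)
    (A : EuclideanSpace ℝ (Fin d) →L[ℝ] EuclideanSpace ℝ (Fin d))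
    (hAbij : Function.Bijective A) (hAnorm : ‖A‖ < 1)
    (c : Fin l → EuclideanSpace ℝ (Fin d))
    (K : Set (EuclideanSpace ℝ (Fin d))) (hKcomp : IsCompact K) (hKne : K.Nonempty)
    (hKattr : K = ⋃ i, (fun x => A x + c i) '' K)
    (π : Sig l → EuclideanSpace ℝ (Fin d))
    (hπ : ∀ x, (⋂ n, itIm (fun i x => A x + c i) K x n) = {π x})
    (f : EuclideanSpace ℝ (Fin d) → ℝ) (hf : Continuous f) :
    limsup (fun n : ℕ => Real.log (Zsum A K π f n) / n) atTop
      ≤ sSup {r : ℝ | ∃ μ : Measure (Sig l), IsProbabilityMeasure μ ∧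
        Measure.map shift μ = μ ∧ r = projEntropy π μ + ∫ x, f (π x) ∂μ} := by
  obtain ⟨hK, B, R, C⟩ := exists_coding A hAbij hAnorm c K hKcomp hKattr π hπ
  obtain ⟨M, hM⟩ := hKcomp.exists_bound_of_continuousOn hf.continuousOn
  have hM' : ∀ x, |f (π x)| ≤ M := fun x => hM _ (hK x)
  let x0 : Sig l := fun _ => ⟨0, hl⟩
  set S := sSup {r : ℝ | ∃ μ : Measure (Sig l), IsProbabilityMeasure μ ∧
    Measure.map shift μ = μ ∧ r = projEntropy π μ + ∫ x, f (π x) ∂μ} with hSdef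
  have hS : ∀ m : Measure (Sig l), IsProbabilityMeasure m → m.map shift = m →
      projEntropy π m + ∫ x, f (π x) ∂m ≤ S := by
    intro m hm hmi
    refine le_csSup ⟨l + M, ?_⟩ ⟨m, hm, hmi, rfl⟩
    rintro _ ⟨μ, hμ, -, rfl⟩
    refine add_le_add (projEntropy_le C μ) ((le_abs_self _).trans ?_)
    have := norm_integral_le_of_norm_le_const (μ := μ) (f := fun x => f (π x))
      (Eventually.of_forall hM')
    rwa [probReal_univ, mul_one] at this
  have hlow : ∀ᶠ n : ℕ in atTop, -M ≤ Real.log (Zsum A K π f n) / n := by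
    filter_upwards [eventually_gt_atTop 0] with n hn
    have hnr : (0 : ℝ) < n := by exact_mod_cast hn
    rw [le_div_iff₀ hnr]
    have h1 := Real.log_le_log (Real.exp_pos _) (exp_le_Zsum C hK hM' x0 n)
    rw [Real.log_exp] at h1
    linarith
  have hcob : IsCoboundedUnder (· ≤ ·) atTop fun n : ℕ => Real.log (Zsum A K π f n) / n :=
    IsBoundedUnder.isCoboundedUnder_le ⟨-M, eventually_map.2 hlow⟩
  refine le_of_forall_pos_le_add fun ε hε => ?_
  obtain ⟨D, hD⟩ := C.log_Zsum_le hK hf hM' x0 hS (half_pos hε)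
  refine limsup_le_of_le hcob ?_
  have ht : Tendsto (fun n : ℕ => D / (n : ℝ)) atTop (nhds 0) :=
    tendsto_const_div_atTop_nhds_zero_nat _
  filter_upwards [eventually_gt_atTop 0, ht.eventually_lt_const (half_pos hε)] with n hn h2
  have hnr : (0 : ℝ) < n := by exact_mod_cast hn
  rw [div_lt_iff₀ hnr] at h2
  rw [div_le_iff₀ hnr]
  have := hD n hn
  linarith

end
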